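/- arXiv:2505.10555 — 2 statements merged into one kernel-verified Lean document; each statement's English description precedes it below -/
import Mathlib

section
/- There is an absolute constant C > 0 such that for every n ≥ 1 and all unit vectors u, v ∈ ℝⁿ, if G is a GOTE(4,n) tensor and ℙ_{u,v} denotes the law on ℝ^{n(n+1)/2} of the vector of upper-triangular entries ((G·u⊗v)_{ij})_{1 ≤ i ≤ j ≤ n}, then d_TV(ℙ_{u,v}, ℙ_{u,u}) ≤ C·n·‖u − v‖₂, where d_TV(μ,ν) = sup_{A measurable} |μ(A) − ν(A)| is the total variation distance. -/
open MeasureTheory ProbabilityTheory Filter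

noncomputable section

/-- The size-`r` multiset of entries of a tuple `a : Fin r → Fin n`. -/
def tupleSym {n r : ℕ} (a : Fin r → Fin n) : Sym (Fin n) r :=
  ⟨(List.ofFn a : Multiset (Fin n)), by simp⟩

/-- `#Perm(a)`: the number of tuples with the same multiset of entries as `a`. -/
def permCount {n r : ℕ} (a : Fin r → Fin n) : ℕ :=
  (Finset.univ.filter (fun b : Fin r → Fin n => tupleSym b = tupleSym a)).card

/-- The sample space for a GOTE(r,n) tensor: one standard Gaussian coordinate for each
size-`r` multiset of indices. -/
abbrev GoteSpace (r n : ℕ) : Type := Sym (Fin n) r → ℝ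

/-- The law of the coordinates of a GOTE(r,n) tensor: a product of standard Gaussians. -/
def goteMeasure (r n : ℕ) : Measure (GoteSpace r n) :=
  Measure.pi fun _ => gaussianReal 0 1

instance (r n : ℕ) : IsProbabilityMeasure (goteMeasure r n) := by
  unfold goteMeasure; infer_instance

/-- The entries of the GOTE(r,n) tensor built from the Gaussian coordinates `ω`. -/
def gote {r n : ℕ} (ω : GoteSpace r n) (a : Fin r → Fin n) : ℝ :=
  Real.sqrt ((r : ℝ) / (permCount a : ℝ)) * ω (tupleSym a)

/-- The index tuple `(i, j, f 0, …, f (r-3))`. -/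
def glue {n r : ℕ} (i j : Fin n) (f : Fin (r - 2) → Fin n) : Fin r → Fin n :=
  fun t =>
    if h0 : (t : ℕ) = 0 then i
    else if h1 : (t : ℕ) = 1 then j
    else f ⟨(t : ℕ) - 2, by have := t.isLt; omega⟩

/-- The pure contraction `G ⬝ w^{⊗(r-2)}`, an `n × n` random symmetric matrix. -/
def pureContraction {r n : ℕ} (ω : GoteSpace r n) (w : Fin n → ℝ) :
    Matrix (Fin n) (Fin n) ℝ :=
  fun i j => ∑ f : Fin (r - 2) → Fin n, gote ω (glue i j f) * ∏ k, w (f k)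

open Classical in
/-- The eigenvalues (in some order) of a matrix, defined for symmetric matrices via the
spectral theorem and as `0` otherwise. -/
def eigsOf {n : ℕ} (A : Matrix (Fin n) (Fin n) ℝ) : Fin n → ℝ :=
  if h : A.IsHermitian then h.eigenvalues else 0

/-- The largest eigenvalue `λ₁` of a symmetric matrix. -/
def lambdaMax {n : ℕ} (A : Matrix (Fin n) (Fin n) ℝ) : ℝ := ⨆ i, eigsOf A i

/-- The smallest eigenvalue `λₙ` of a symmetric matrix. -/
def lambdaMin {n : ℕ} (A : Matrix (Fin n) (Fin n) ℝ) : ℝ := ⨅ i, eigsOf A i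

/-- The semicircle distribution with variance `σ²` (parameter `s = σ²`). -/
def semicircle (s : ℝ) : Measure ℝ :=
  volume.withDensity fun x => ENNReal.ofReal (Real.sqrt (4 * s - x ^ 2) / (2 * Real.pi * s))

end

/-- The mixed contraction `G·u⊗v` of a GOTE(4,n) tensor: the `n × n` random symmetric
matrix with entries `(G·u⊗v)_{ij} = Σ_{a,b} G_{i,j,a,b} u_a v_b`. -/
noncomputable def mixedContraction {n : ℕ} (ω : GoteSpace 4 n) (u v : Fin n → ℝ) :
    Matrix (Fin n) (Fin n) ℝ :=
  fun i j => ∑ a : Fin n, ∑ b : Fin n, gote ω ![i, j, a, b] * u a * v b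

/-- The total variation distance between two measures:
`sup_A |μ(A) − ν(A)|` over measurable sets `A`. -/
noncomputable def tvDist {X : Type*} [MeasurableSpace X] (μ ν : Measure X) : ℝ :=
  ⨆ A : {A : Set X // MeasurableSet A}, |(μ A.1).toReal - (ν A.1).toReal|

/-- The law on `ℝ^{n(n+1)/2}` of the upper-triangular entries of the mixed contraction
`G·u⊗v` of a GOTE(4,n) tensor. -/
noncomputable def mixedUpperLaw (n : ℕ) (u v : Fin n → ℝ) :
    Measure ({p : Fin n × Fin n // p.1 ≤ p.2} → ℝ) :=
  Measure.map (fun ω (p : {p : Fin n × Fin n // p.1 ≤ p.2}) =>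
    mixedContraction ω u v p.1.1 p.1.2) (goteMeasure 4 n)

/-!
The upper-triangular entries of `G·u⊗v` are a linear image of the standard Gaussian vector `ω`, so
`ℙ_{u,v}` is a centered Gaussian law and it suffices to compare covariances. For a tensor `T`, the
variance of `∑ a, T a * G a` is `(r / r!) ∑ σ, ⟨T, T ∘ σ⟩`. For `T = C ⊗ u ⊗ u` with `u` a unit
vector it equals `(‖A‖² + 4‖A u‖² + ⟨u, A u⟩²) / 6`, where `A = C + Cᵀ`, which is at least
`‖C‖² / 3` when `C` is upper triangular. By Cauchy–Schwarz, replacing `u ⊗ u` by `u ⊗ v` changes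
the variance by at most `8 ‖u - v‖ ‖C‖²`, hence the covariances differ by a relative error of at
most `ε = 24 ‖u - v‖`. After simultaneous diagonalization of the two covariances, a `χ²` bound for
product measures gives a total variation distance of at most `2 √d ε` in dimension `d ≤ n²`.
-/

open scoped NNReal Matrix

section TotalVariation

variable {X Y : Type*} [MeasurableSpace X] [MeasurableSpace Y] {μ ν : Measure X}

lemma tvDist_le {c : ℝ} (h : ∀ A, MeasurableSet A → |μ.real A - ν.real A| ≤ c) :
    tvDist μ ν ≤ c :=
  have : Nonempty {A : Set X // MeasurableSet A} := ⟨⟨∅, .empty⟩⟩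
  ciSup_le fun A ↦ h A.1 A.2

lemma tvDist_le_one [IsProbabilityMeasure μ] [IsProbabilityMeasure ν] : tvDist μ ν ≤ 1 :=
  tvDist_le fun _ _ ↦ abs_sub_le_of_nonneg_of_le measureReal_nonneg measureReal_le_one
    measureReal_nonneg measureReal_le_one

lemma abs_measureReal_sub_le_tvDist [IsFiniteMeasure μ] [IsFiniteMeasure ν] {A : Set X}
    (hA : MeasurableSet A) : |μ.real A - ν.real A| ≤ tvDist μ ν := by
  refine le_ciSup (f := fun A : {A : Set X // MeasurableSet A} ↦ |μ.real A.1 - ν.real A.1|)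
    ⟨max (μ.real .univ) (ν.real .univ), ?_⟩ ⟨A, hA⟩
  rintro _ ⟨B, rfl⟩
  exact abs_sub_le_of_nonneg_of_le
    measureReal_nonneg (le_max_of_le_left (measureReal_mono (Set.subset_univ _)))
    measureReal_nonneg (le_max_of_le_right (measureReal_mono (Set.subset_univ _)))

lemma tvDist_map_le [IsFiniteMeasure μ] [IsFiniteMeasure ν] {f : X → Y} (hf : Measurable f) :
    tvDist (μ.map f) (ν.map f) ≤ tvDist μ ν :=
  tvDist_le fun A hA ↦ by
    rw [map_measureReal_apply hf hA, map_measureReal_apply hf hA]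
    exact abs_measureReal_sub_le_tvDist (hf hA)

lemma integral_abs_le_sqrt_integral_sq [IsProbabilityMeasure μ] {f : X → ℝ} (hf : MemLp f 2 μ) :
    ∫ x, |f x| ∂μ ≤ √(∫ x, f x ^ 2 ∂μ) := by
  refine Real.le_sqrt_of_sq_le ?_
  have h := variance_nonneg |f| μ
  rw [variance_eq_sub hf.abs] at h
  simpa [sub_nonneg, sq_abs] using h

lemma measureReal_withDensity_ofReal {g : X → ℝ} (hg : 0 ≤ g) (hgi : Integrable g ν) {A : Set X}
    (hA : MeasurableSet A) :
    (ν.withDensity fun x ↦ ENNReal.ofReal (g x)).real A = ∫ x in A, g x ∂ν := by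
  rw [measureReal_def, withDensity_apply _ hA, integral_eq_lintegral_of_nonneg_ae
    (.of_forall hg) hgi.aestronglyMeasurable.restrict]

lemma tvDist_withDensity_le_sqrt_variance [IsProbabilityMeasure ν] {g : X → ℝ} (hg : 0 ≤ g)
    (hg2 : MemLp g 2 ν) (hg1 : ∫ x, g x ∂ν = 1) :
    tvDist (ν.withDensity fun x ↦ ENNReal.ofReal (g x)) ν ≤ √Var[g; ν] := by
  have hgi : Integrable g ν := hg2.integrable one_le_two
  have hg1i : Integrable (fun x ↦ g x - 1) ν := hgi.sub (integrable_const 1)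
  refine tvDist_le fun A hA ↦ ?_
  calc |(ν.withDensity fun x ↦ ENNReal.ofReal (g x)).real A - ν.real A|
      = |∫ x in A, (g x - 1) ∂ν| := by
        rw [integral_sub hgi.integrableOn (integrable_const 1),
          measureReal_withDensity_ofReal hg hgi hA, setIntegral_const, smul_eq_mul, mul_one]
    _ ≤ ∫ x in A, |g x - 1| ∂ν := abs_integral_le_integral_abs
    _ ≤ ∫ x, |g x - 1| ∂ν :=
        setIntegral_le_integral hg1i.abs (.of_forall fun _ ↦ abs_nonneg _)
    _ ≤ √(∫ x, (g x - 1) ^ 2 ∂ν) :=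
        integral_abs_le_sqrt_integral_sq (hg2.sub (memLp_const 1))
    _ = √Var[g; ν] := by rw [variance_eq_integral hg2.aemeasurable, hg1]

end TotalVariation

section Product

variable {ι : Type*} [Fintype ι] {E : ι → Type*} [∀ i, MeasurableSpace (E i)]
  {ν : ∀ i, Measure (E i)} {g : ∀ i, E i → ℝ}

lemma pi_withDensity_ofReal [∀ i, SigmaFinite (ν i)] (hg : ∀ i, 0 ≤ g i)
    (hgi : ∀ i, Integrable (g i) (ν i)) :
    Measure.pi (fun i ↦ (ν i).withDensity fun x ↦ ENNReal.ofReal (g i x)) =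
      (Measure.pi ν).withDensity fun x ↦ ENNReal.ofReal (∏ i, g i (x i)) := by
  have (i : ι) : IsFiniteMeasure ((ν i).withDensity fun x ↦ ENNReal.ofReal (g i x)) :=
    isFiniteMeasure_withDensity_ofReal (hgi i).2
  refine Measure.pi_eq fun s hs ↦ ?_
  rw [withDensity_apply _ (.univ_pi hs), Measure.restrict_pi_pi,
    ← ofReal_integral_eq_lintegral_ofReal
      (.fintype_prod_dep fun i ↦ (hgi i).integrableOn)
      (.of_forall fun x ↦ Finset.prod_nonneg fun i _ ↦ hg i (x i)),
    integral_fintype_prod_eq_prod,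
    ENNReal.ofReal_prod_of_nonneg fun i _ ↦ integral_nonneg (hg i)]
  refine Finset.prod_congr rfl fun i _ ↦ ?_
  rw [withDensity_apply _ (hs i), ofReal_integral_eq_lintegral_ofReal (hgi i).integrableOn
    (.of_forall (hg i))]

lemma tvDist_pi_withDensity_le [∀ i, IsProbabilityMeasure (ν i)] (hg : ∀ i, 0 ≤ g i)
    (hg2 : ∀ i, MemLp (g i) 2 (ν i)) (hg1 : ∀ i, ∫ x, g i x ∂ν i = 1) :
    tvDist (Measure.pi fun i ↦ (ν i).withDensity fun x ↦ ENNReal.ofReal (g i x)) (Measure.pi ν) ≤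
      √(∏ i, ∫ x, g i x ^ 2 ∂ν i - 1) := by
  have hgi (i : ι) : Integrable (g i) (ν i) := (hg2 i).integrable one_le_two
  have prod_memLp : MemLp (fun x ↦ ∏ i, g i (x i)) 2 (Measure.pi ν) := by
    rw [memLp_two_iff_integrable_sq (Integrable.fintype_prod_dep hgi).aestronglyMeasurable]
    simp_rw [← Finset.prod_pow]
    exact .fintype_prod_dep fun i ↦ (hg2 i).integrable_sq
  have integral_prod : ∫ x, ∏ i, g i (x i) ∂Measure.pi ν = 1 := by
    simp_rw [integral_fintype_prod_eq_prod, hg1, Finset.prod_const_one]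
  have variance_prod : Var[fun x ↦ ∏ i, g i (x i); Measure.pi ν] =
      ∏ i, ∫ x, g i x ^ 2 ∂ν i - 1 := by
    rw [variance_eq_sub prod_memLp, integral_prod, ← integral_fintype_prod_eq_prod]
    simp [Finset.prod_pow]
  rw [pi_withDensity_ofReal hg hgi, ← variance_prod]
  exact tvDist_withDensity_le_sqrt_variance
    (fun x ↦ Finset.prod_nonneg fun i _ ↦ hg i (x i)) prod_memLp integral_prod

end Product

/-- The density of the centered Gaussian of variance `v` with respect to the standard Gaussian
on `ℝ`. For `v = 0`, where there is no density, it takes the junk value `0`. -/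
noncomputable def gaussianDensityRatio (v : ℝ≥0) (x : ℝ) : ℝ :=
  gaussianPDFReal 0 v x / gaussianPDFReal 0 1 x

section GaussianDensityRatio

variable {v : ℝ≥0}

lemma gaussianDensityRatio_nonneg : 0 ≤ gaussianDensityRatio v :=
  fun _ ↦ div_nonneg (gaussianPDFReal_nonneg _ _ _) (gaussianPDFReal_nonneg _ _ _)

lemma measurable_gaussianDensityRatio : Measurable (gaussianDensityRatio v) :=
  (measurable_gaussianPDFReal 0 v).div (measurable_gaussianPDFReal 0 1)

lemma gaussianPDFReal_mul_gaussianDensityRatio (x : ℝ) :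
    gaussianPDFReal 0 1 x * gaussianDensityRatio v x = gaussianPDFReal 0 v x :=
  mul_div_cancel₀ _ (gaussianPDFReal_pos 0 1 x one_ne_zero).ne'

lemma withDensity_gaussianDensityRatio (hv : v ≠ 0) :
    (gaussianReal 0 1).withDensity (fun x ↦ ENNReal.ofReal (gaussianDensityRatio v x)) =
      gaussianReal 0 v := by
  rw [gaussianReal_of_var_ne_zero 0 hv, gaussianReal_of_var_ne_zero 0 one_ne_zero,
    ← withDensity_mul _ (measurable_gaussianPDF 0 1)
      measurable_gaussianDensityRatio.ennreal_ofReal]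
  congr 1
  ext x
  simp only [Pi.mul_apply, gaussianPDF, ← ENNReal.ofReal_mul (gaussianPDFReal_nonneg 0 1 x),
    gaussianPDFReal_mul_gaussianDensityRatio]

lemma integral_gaussianDensityRatio (hv : v ≠ 0) :
    ∫ x, gaussianDensityRatio v x ∂gaussianReal 0 1 = 1 := by
  simp_rw [integral_gaussianReal_eq_integral_smul one_ne_zero, smul_eq_mul,
    gaussianPDFReal_mul_gaussianDensityRatio, integral_gaussianPDFReal_eq_one 0 hv]

lemma gaussianPDFReal_mul_gaussianDensityRatio_sq (hv : v ≠ 0) (x : ℝ) :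
    gaussianPDFReal 0 1 x * gaussianDensityRatio v x ^ 2 =
      (v : ℝ)⁻¹ * (√(2 * Real.pi))⁻¹ * Real.exp (-((v : ℝ)⁻¹ - 2⁻¹) * x ^ 2) := by
  have exp_eq : Real.exp (-((v : ℝ)⁻¹ - 2⁻¹) * x ^ 2) =
      Real.exp (-x ^ 2 / (2 * v)) ^ 2 / Real.exp (-x ^ 2 / 2) := by
    rw [← Real.exp_nat_mul, ← Real.exp_sub]
    congr 1
    push_cast
    field
  have sqrt_sq : √(2 * Real.pi * v) ^ 2 = √(2 * Real.pi) ^ 2 * v := by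
    rw [Real.sq_sqrt (by positivity), Real.sq_sqrt (by positivity)]
  simp only [gaussianDensityRatio, gaussianPDFReal, NNReal.coe_one, mul_one, sub_zero, exp_eq]
  field_simp
  rw [sqrt_sq]

lemma inv_sub_half_pos (hv : v ≠ 0) (hv2 : v < 2) : 0 < (v : ℝ)⁻¹ - 2⁻¹ :=
  sub_pos.2 (inv_strictAnti₀ (by positivity) (by exact_mod_cast hv2))

lemma memLp_two_gaussianDensityRatio (hv : v ≠ 0) (hv2 : v < 2) :
    MemLp (gaussianDensityRatio v) 2 (gaussianReal 0 1) := by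
  rw [memLp_two_iff_integrable_sq measurable_gaussianDensityRatio.aestronglyMeasurable,
    gaussianReal_of_var_ne_zero 0 one_ne_zero, integrable_withDensity_iff_integrable_smul'
      (measurable_gaussianPDF 0 1) (.of_forall fun _ ↦ ENNReal.ofReal_lt_top)]
  simp only [toReal_gaussianPDF, smul_eq_mul, gaussianPDFReal_mul_gaussianDensityRatio_sq hv]
  exact (integrable_exp_neg_mul_sq (inv_sub_half_pos hv hv2)).const_mul _

lemma integral_gaussianDensityRatio_sq (hv : v ≠ 0) (hv2 : v < 2) :
    ∫ x, gaussianDensityRatio v x ^ 2 ∂gaussianReal 0 1 = (√((v : ℝ) * (2 - v)))⁻¹ := by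
  have hv_pos : (0 : ℝ) < v := by positivity
  have two_sub_pos : 0 < 2 - (v : ℝ) := sub_pos.2 (by exact_mod_cast hv2)
  have rate_eq : (v : ℝ)⁻¹ - 2⁻¹ = (2 - v) / (2 * v) := by field
  simp_rw [integral_gaussianReal_eq_integral_smul one_ne_zero, smul_eq_mul,
    gaussianPDFReal_mul_gaussianDensityRatio_sq hv, integral_const_mul, integral_gaussian, rate_eq]
  nth_rewrite 1 [← Real.sqrt_sq hv_pos.le]
  simp_rw [← Real.sqrt_inv]
  rw [← Real.sqrt_mul (by positivity), ← Real.sqrt_mul (by positivity)]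
  congr 1
  field

lemma integral_gaussianDensityRatio_sq_le_exp {ε : ℝ} (hε : ε ≤ 1 / 2) (h : |(v : ℝ) - 1| ≤ ε) :
    ∫ x, gaussianDensityRatio v x ^ 2 ∂gaussianReal 0 1 ≤ Real.exp (ε ^ 2) := by
  obtain ⟨hv_ge, hv_le⟩ := abs_le.1 h
  have hv : v ≠ 0 := NNReal.coe_pos.1 (by linarith) |>.ne'
  have hv2 : v < 2 := by exact_mod_cast (by linarith : (v : ℝ) < 2)
  have sq_le : ε ^ 2 ≤ 1 / 4 := by nlinarith [abs_nonneg ((v : ℝ) - 1)]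
  have one_sub_le : 1 - ε ^ 2 ≤ v * (2 - v) := by nlinarith
  rw [integral_gaussianDensityRatio_sq hv hv2]
  refine inv_le_of_inv_le₀ (Real.exp_pos _) (Real.le_sqrt_of_sq_le ?_)
  calc (Real.exp (ε ^ 2))⁻¹ ^ 2 = (Real.exp (2 * ε ^ 2))⁻¹ := by
        rw [inv_pow, ← Real.exp_nat_mul, Nat.cast_ofNat]
    _ ≤ (1 + 2 * ε ^ 2)⁻¹ := by
        gcongr
        linarith [Real.add_one_le_exp (2 * ε ^ 2)]
    _ ≤ 1 - ε ^ 2 := by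
        rw [inv_le_iff_one_le_mul₀ (by positivity)]
        nlinarith [sq_nonneg ε]
    _ ≤ v * (2 - v) := one_sub_le

end GaussianDensityRatio

lemma tvDist_pi_gaussianReal_le_of_le_half {ι : Type*} [Fintype ι] {v : ι → ℝ≥0} {ε : ℝ}
    (hε : ε ≤ 1 / 2) (hv : ∀ i, |(v i : ℝ) - 1| ≤ ε) :
    tvDist (Measure.pi fun i ↦ gaussianReal 0 (v i)) (Measure.pi fun _ ↦ gaussianReal 0 1) ≤
      √(Real.exp (Fintype.card ι * ε ^ 2) - 1) := by
  have v_ne_zero (i : ι) : v i ≠ 0 :=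
    NNReal.coe_pos.1 (by linarith [abs_le.1 (hv i)]) |>.ne'
  have v_lt_two (i : ι) : v i < 2 := by
    exact_mod_cast (by linarith [abs_le.1 (hv i)] : (v i : ℝ) < 2)
  calc tvDist (Measure.pi fun i ↦ gaussianReal 0 (v i)) (Measure.pi fun _ ↦ gaussianReal 0 1)
      ≤ √(∏ i, ∫ x, gaussianDensityRatio (v i) x ^ 2 ∂gaussianReal 0 1 - 1) := by
        simp_rw [← withDensity_gaussianDensityRatio (v_ne_zero _)]
        exact tvDist_pi_withDensity_le (fun _ ↦ gaussianDensityRatio_nonneg)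
          (fun i ↦ memLp_two_gaussianDensityRatio (v_ne_zero i) (v_lt_two i))
          fun i ↦ integral_gaussianDensityRatio (v_ne_zero i)
    _ ≤ √(∏ _ : ι, Real.exp (ε ^ 2) - 1) := by
        gcongr with i
        exact integral_gaussianDensityRatio_sq_le_exp hε (hv i)
    _ = √(Real.exp (Fintype.card ι * ε ^ 2) - 1) := by
        rw [Finset.prod_const, ← Real.exp_nat_mul, Finset.card_univ]

theorem tvDist_pi_gaussianReal_le {ι : Type*} [Fintype ι] {v : ι → ℝ≥0} {ε : ℝ}
    (hv : ∀ i, |(v i : ℝ) - 1| ≤ ε) :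
    tvDist (Measure.pi fun i ↦ gaussianReal 0 (v i)) (Measure.pi fun _ ↦ gaussianReal 0 1) ≤
      2 * √(Fintype.card ι) * ε := by
  cases isEmpty_or_nonempty ι with
  | inl _ =>
    rw [Subsingleton.elim (fun i ↦ gaussianReal 0 (v i)) fun _ ↦ gaussianReal 0 1]
    exact tvDist_le fun A _ ↦ by simp
  | inr hι =>
    have ε_nonneg : 0 ≤ ε := (abs_nonneg _).trans (hv hι.some)
    have one_le_card : (1 : ℝ) ≤ Fintype.card ι := by exact_mod_cast Fintype.card_pos
    have sq_sqrt_card := Real.sq_sqrt (Nat.cast_nonneg (α := ℝ) (Fintype.card ι))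
    by_cases hsmall : Fintype.card ι * ε ^ 2 ≤ 1 / 4
    · have exp_sub_one_le := Real.abs_exp_sub_one_le (x := Fintype.card ι * ε ^ 2)
        (by rw [abs_of_nonneg (by positivity)]; linarith)
      refine (tvDist_pi_gaussianReal_le_of_le_half (by nlinarith) hv).trans
        (Real.sqrt_le_iff.2 ⟨by positivity, ?_⟩)
      rw [abs_of_nonneg (a := Fintype.card ι * ε ^ 2) (by positivity)] at exp_sub_one_le
      nlinarith [le_abs_self (Real.exp (Fintype.card ι * ε ^ 2) - 1)]
    · refine tvDist_le_one.trans ((one_le_sq_iff₀ (by positivity)).1 ?_)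
      nlinarith

section MultivariateGaussian

open Matrix WithLp
open scoped ComplexOrder MatrixOrder RealInnerProductSpace

variable {ι κ : Type*} [Fintype ι] [Fintype κ]

lemma multivariateGaussian_map_toEuclideanLin [DecidableEq ι] [DecidableEq κ]
    {S : Matrix ι ι ℝ} (hS : S.PosSemidef) (A : Matrix κ ι ℝ) :
    (multivariateGaussian 0 S).map A.toEuclideanLin = multivariateGaussian 0 (A * S * Aᵀ) := by
  have hA : Measurable A.toEuclideanLin :=
    A.toEuclideanLin.continuous_of_finiteDimensional.measurable
  have hASA : (A * S * Aᵀ).PosSemidef := by simpa using hS.mul_mul_conjTranspose_same A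
  have inner_eq (x : EuclideanSpace ℝ ι) (t : EuclideanSpace ℝ κ) :
      ⟪A.toEuclideanLin x, t⟫ = ⟪x, Aᵀ.toEuclideanLin t⟫ := by
    rw [← conjTranspose_eq_transpose_of_trivial, toEuclideanLin_conjTranspose_eq_adjoint,
      LinearMap.adjoint_inner_right]
  refine Measure.ext_of_charFun (funext fun t ↦ ?_)
  have charFun_eq : charFun ((multivariateGaussian 0 S).map A.toEuclideanLin) t =
      charFun (multivariateGaussian 0 S) (Aᵀ.toEuclideanLin t) := by
    rw [charFun_apply, charFun_apply, integral_map hA.aemeasurable (by fun_prop)]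
    simp_rw [inner_eq]
  rw [charFun_eq, charFun_multivariateGaussian hS, charFun_multivariateGaussian hASA]
  simp [dotProduct_mulVec, ← vecMul_vecMul, ← mulVec_transpose A]

lemma map_toLp_pi_gaussianReal [DecidableEq ι] (v : ι → ℝ≥0) :
    (Measure.pi fun i ↦ gaussianReal 0 (v i)).map (toLp 2) =
      multivariateGaussian 0 (diagonal fun i ↦ (v i : ℝ)) := by
  have hv : (diagonal fun i ↦ (v i : ℝ)).PosSemidef := .diagonal fun i ↦ (v i).2
  refine Measure.ext_of_charFun (E := EuclideanSpace ℝ ι) (funext fun t ↦ ?_)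
  rw [charFun_multivariateGaussian hv, charFun_pi]
  simp only [charFun_gaussianReal, ← Complex.exp_sum, dotProduct, mulVec_diagonal]
  simp [Finset.sum_div, mul_left_comm, mul_comm, sq]

lemma exists_isUnit_mul_conjTranspose_eq_and_mul_diagonal_mul_conjTranspose_eq
    [DecidableEq ι] {𝕜 : Type*} [RCLike 𝕜] {T S : Matrix ι ι 𝕜} (hT : T.PosDef)
    (hS : S.IsHermitian) :
    ∃ (R : Matrix ι ι 𝕜) (l : ι → ℝ),
      IsUnit R ∧ R * Rᴴ = T ∧ R * diagonal (RCLike.ofReal ∘ l) * Rᴴ = S := by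
  set Q := CFC.sqrt T
  have Q_mul_Q : Q * Q = T := CFC.sqrt_mul_sqrt_self T hT.posSemidef.nonneg
  have isUnit_Q : IsUnit Q := (CFC.isUnit_sqrt_iff T hT.posSemidef.nonneg).2 hT.isUnit
  have isUnit_det_Q : IsUnit Q.det := Q.isUnit_iff_isUnit_det.1 isUnit_Q
  have Q_isHermitian : Q.IsHermitian := (CFC.sqrt_nonneg T).posSemidef.isHermitian
  have hM : (Q⁻¹ * S * Q⁻¹).IsHermitian := by
    simpa [Q_isHermitian.inv.eq] using isHermitian_mul_mul_conjTranspose Q⁻¹ hS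
  have spectral := hM.spectral_theorem
  rw [Unitary.conjStarAlgAut_apply] at spectral
  set U : Matrix ι ι 𝕜 := hM.eigenvectorUnitary.1
  have U_mul_star : U * Uᴴ = 1 := Unitary.coe_mul_star_self hM.eigenvectorUnitary
  refine ⟨Q * U, hM.eigenvalues, isUnit_Q.mul (.of_mul_eq_one _ U_mul_star), ?_, ?_⟩
  · rw [conjTranspose_mul, Q_isHermitian.eq, Matrix.mul_assoc, ← Matrix.mul_assoc U, U_mul_star,
      Matrix.one_mul, Q_mul_Q]
  · calc Q * U * diagonal (RCLike.ofReal ∘ hM.eigenvalues) * (Q * U)ᴴ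
        = Q * (U * diagonal (RCLike.ofReal ∘ hM.eigenvalues) * Uᴴ) * Q := by
          simp only [conjTranspose_mul, Q_isHermitian.eq, Matrix.mul_assoc]
      _ = Q * (Q⁻¹ * S * Q⁻¹) * Q := congrArg (Q * · * Q) spectral.symm
      _ = S := by
          rw [Matrix.mul_assoc Q⁻¹, mul_nonsing_inv_cancel_left _ _ isUnit_det_Q,
            nonsing_inv_mul_cancel_right _ _ isUnit_det_Q]

theorem tvDist_multivariateGaussian_le [DecidableEq ι] {S T : Matrix ι ι ℝ}
    (hS : S.PosSemidef) (hT : T.PosDef) {ε : ℝ}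
    (h : ∀ x, |x ⬝ᵥ S *ᵥ x - x ⬝ᵥ T *ᵥ x| ≤ ε * (x ⬝ᵥ T *ᵥ x)) :
    tvDist (multivariateGaussian 0 S) (multivariateGaussian 0 T) ≤
      2 * √(Fintype.card ι) * ε := by
  obtain ⟨R, l, hR, rfl, rfl⟩ :=
    exists_isUnit_mul_conjTranspose_eq_and_mul_diagonal_mul_conjTranspose_eq hT hS.isHermitian
  simp only [conjTranspose_eq_transpose_of_trivial, RCLike.ofReal_real_eq_id,
    CompTriple.comp_eq] at *
  have l_nonneg : ∀ i, 0 ≤ l i := by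
    rw [← posSemidef_diagonal_iff]
    exact hR.posSemidef_star_right_conjugate_iff.1 hS
  lift l to ι → ℝ≥0 using l_nonneg
  have abs_sub_one_le (i : ι) : |(l i : ℝ) - 1| ≤ ε := by
    obtain ⟨x, hx⟩ : ∃ x, Rᵀ *ᵥ x = Pi.single i 1 :=
      mulVec_surjective_iff_isUnit.2 (R.isUnit_transpose.2 hR) _
    have quadForm_eq (D : Matrix ι ι ℝ) : x ⬝ᵥ (R * D * Rᵀ) *ᵥ x = D i i := by
      rw [← mulVec_mulVec, ← mulVec_mulVec, dotProduct_mulVec, ← mulVec_transpose, hx]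
      simp
    have quadForm_one : x ⬝ᵥ (R * Rᵀ) *ᵥ x = 1 := by simpa using quadForm_eq 1
    simpa [quadForm_eq, quadForm_one] using h x
  have one_posSemidef : (1 : Matrix ι ι ℝ).PosSemidef := .one
  have diagonal_posSemidef : (diagonal fun i ↦ (l i : ℝ)).PosSemidef := .diagonal fun i ↦ (l i).2
  calc tvDist (multivariateGaussian 0 (R * diagonal (fun i ↦ (l i : ℝ)) * Rᵀ))
        (multivariateGaussian 0 (R * Rᵀ))
      = tvDist ((multivariateGaussian 0 (diagonal fun i ↦ (l i : ℝ))).map R.toEuclideanLin)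
          ((multivariateGaussian 0 1).map R.toEuclideanLin) := by
        rw [multivariateGaussian_map_toEuclideanLin diagonal_posSemidef,
          multivariateGaussian_map_toEuclideanLin one_posSemidef, Matrix.mul_one]
    _ ≤ tvDist (multivariateGaussian 0 (diagonal fun i ↦ (l i : ℝ))) (multivariateGaussian 0 1) :=
        tvDist_map_le R.toEuclideanLin.continuous_of_finiteDimensional.measurable
    _ ≤ tvDist (Measure.pi fun i ↦ gaussianReal 0 (l i)) (Measure.pi fun _ ↦ gaussianReal 0 1) := by
        rw [multivariateGaussian_zero_one, ← map_pi_eq_stdGaussian, ← map_toLp_pi_gaussianReal]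
        exact tvDist_map_le (by fun_prop)
    _ ≤ 2 * √(Fintype.card ι) * ε := tvDist_pi_gaussianReal_le abs_sub_one_le

lemma map_mulVec_pi_gaussianReal [DecidableEq κ] (X : Matrix κ ι ℝ) :
    (Measure.pi fun _ ↦ gaussianReal 0 1).map (X *ᵥ ·) =
      (multivariateGaussian 0 (X * Xᵀ)).map ofLp := by
  classical
  have hX : Measurable X.toEuclideanLin :=
    X.toEuclideanLin.continuous_of_finiteDimensional.measurable
  have map_one := multivariateGaussian_map_toEuclideanLin PosSemidef.one X
  rw [Matrix.mul_one, multivariateGaussian_zero_one, ← map_pi_eq_stdGaussian] at map_one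
  rw [← map_one, Measure.map_map (by fun_prop) hX, Measure.map_map (by fun_prop) (by fun_prop)]
  rfl

theorem tvDist_map_mulVec_pi_gaussianReal_le {X Y : Matrix κ ι ℝ}
    (hY : Function.Injective Y.vecMul) {ε : ℝ}
    (h : ∀ c, |∑ i, (c ᵥ* X) i ^ 2 - ∑ i, (c ᵥ* Y) i ^ 2| ≤ ε * ∑ i, (c ᵥ* Y) i ^ 2) :
    tvDist ((Measure.pi fun _ ↦ gaussianReal 0 1).map (X *ᵥ ·))
      ((Measure.pi fun _ ↦ gaussianReal 0 1).map (Y *ᵥ ·)) ≤ 2 * √(Fintype.card κ) * ε := by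
  classical
  have quadForm_eq (Z : Matrix κ ι ℝ) (c : κ → ℝ) :
      c ⬝ᵥ (Z * Zᵀ) *ᵥ c = ∑ i, (c ᵥ* Z) i ^ 2 := by
    rw [← mulVec_mulVec, dotProduct_mulVec, mulVec_transpose]
    simp only [dotProduct, sq]
  have hXX : (X * Xᵀ).PosSemidef := by simpa using posSemidef_self_mul_conjTranspose X
  have hYY : (Y * Yᵀ).PosDef := by simpa using PosDef.mul_conjTranspose_self Y hY
  rw [map_mulVec_pi_gaussianReal, map_mulVec_pi_gaussianReal]
  exact (tvDist_map_le (by fun_prop)).trans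
    (tvDist_multivariateGaussian_le hXX hYY fun c ↦ by simpa only [quadForm_eq] using h c)

end MultivariateGaussian

section GoteCovariance

open scoped Nat

variable {n r : ℕ}

lemma tupleSym_surjective : Function.Surjective (tupleSym : (Fin r → Fin n) → Sym (Fin n) r) := by
  rintro ⟨s, hs⟩
  obtain ⟨l, rfl⟩ := Quot.exists_rep s
  obtain rfl : l.length = r := hs
  exact ⟨l.get, Subtype.ext (congrArg Multiset.ofList (List.ofFn_get l))⟩

lemma tupleSym_comp_perm (a : Fin r → Fin n) (σ : Equiv.Perm (Fin r)) :
    tupleSym (a ∘ σ) = tupleSym a :=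
  Subtype.ext (Multiset.coe_eq_coe.2 (σ.ofFn_comp_perm a))

lemma tupleSym_eq_iff_exists_perm {a b : Fin r → Fin n} :
    tupleSym a = tupleSym b ↔ ∃ σ : Equiv.Perm (Fin r), b ∘ σ = a := by
  refine ⟨fun h ↦ ⟨(Tuple.sort a).symm.trans (Tuple.sort b), ?_⟩, ?_⟩
  · have perm : (List.ofFn a).Perm (List.ofFn b) := Multiset.coe_eq_coe.1 (congrArg Subtype.val h)
    have sorted_eq : a ∘ Tuple.sort a = b ∘ Tuple.sort b :=
      List.ofFn_injective (((((Tuple.sort a).ofFn_comp_perm a).trans perm).trans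
        ((Tuple.sort b).ofFn_comp_perm b).symm).eq_of_pairwise'
          (Tuple.monotone_sort a).sortedLE_ofFn.pairwise
          (Tuple.monotone_sort b).sortedLE_ofFn.pairwise)
    rw [Equiv.coe_trans, ← Function.comp_assoc, ← sorted_eq, Function.comp_assoc,
      Equiv.self_comp_symm, Function.comp_id]
  · rintro ⟨σ, rfl⟩
    exact tupleSym_comp_perm b σ

/-- The coefficient vector of the linear functional `ω ↦ ∑ a, T a * gote ω a` of the Gaussian
coordinates, as a function of the tensor `T`. -/
noncomputable def goteCoeff : ((Fin r → Fin n) → ℝ) →ₗ[ℝ] Sym (Fin n) r → ℝ :=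
  LinearMap.pi fun m ↦
    ∑ a with tupleSym a = m, √((r : ℝ) / permCount a) • LinearMap.proj (R := ℝ) a

lemma goteCoeff_apply (T : (Fin r → Fin n) → ℝ) (m : Sym (Fin n) r) :
    goteCoeff T m = ∑ a with tupleSym a = m, √((r : ℝ) / permCount a) * T a := by
  simp [goteCoeff]

lemma sum_mul_gote (T : (Fin r → Fin n) → ℝ) (ω : GoteSpace r n) :
    ∑ a, T a * gote ω a = goteCoeff T ⬝ᵥ ω := by
  simp_rw [dotProduct, goteCoeff_apply, Finset.sum_mul]
  rw [← Finset.sum_fiberwise _ tupleSym]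
  refine Finset.sum_congr rfl fun m _ ↦ Finset.sum_congr rfl fun a ha ↦ ?_
  rw [gote, (Finset.mem_filter.1 ha).2]
  ring

lemma permCount_pos (a : Fin r → Fin n) : 0 < permCount a :=
  Finset.card_pos.2 ⟨a, by simp⟩

lemma goteCoeff_tupleSym (T : (Fin r → Fin n) → ℝ) (a : Fin r → Fin n) :
    goteCoeff T (tupleSym a) =
      √((r : ℝ) / permCount a) * ∑ b with tupleSym b = tupleSym a, T b := by
  rw [goteCoeff_apply, Finset.mul_sum]
  refine Finset.sum_congr rfl fun b hb ↦ ?_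
  rw [permCount, (Finset.mem_filter.1 hb).2, permCount]

/-- The sum of the `r!` tensors obtained from `T` by permuting its indices. -/
def symmetrization (T : (Fin r → Fin n) → ℝ) (a : Fin r → Fin n) : ℝ :=
  ∑ σ : Equiv.Perm (Fin r), T (a ∘ σ)

lemma symmetrization_congr (T : (Fin r → Fin n) → ℝ) {a b : Fin r → Fin n}
    (h : tupleSym a = tupleSym b) : symmetrization T a = symmetrization T b := by
  obtain ⟨σ, rfl⟩ := tupleSym_eq_iff_exists_perm.1 h
  exact Equiv.sum_comp (Equiv.mulLeft σ) fun τ ↦ T (b ∘ τ)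

lemma permCount_mul_symmetrization (T : (Fin r → Fin n) → ℝ) (a : Fin r → Fin n) :
    permCount a * symmetrization T a = r ! * ∑ b with tupleSym b = tupleSym a, T b := by
  have sum_comp_perm (σ : Equiv.Perm (Fin r)) :
      ∑ b with tupleSym b = tupleSym a, T (b ∘ σ) = ∑ b with tupleSym b = tupleSym a, T b :=
    Finset.sum_equiv (σ.symm.arrowCongr (Equiv.refl _))
      (fun b ↦ by simp [Equiv.arrowCongr, tupleSym_comp_perm]) fun _ _ ↦ rfl
  calc permCount a * symmetrization T a
      = ∑ b with tupleSym b = tupleSym a, symmetrization T b := by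
        rw [Finset.sum_congr rfl fun b hb ↦ symmetrization_congr T (Finset.mem_filter.1 hb).2,
          Finset.sum_const, nsmul_eq_mul, permCount]
    _ = r ! * ∑ b with tupleSym b = tupleSym a, T b := by
        simp_rw [symmetrization]
        rw [Finset.sum_comm, Finset.sum_congr rfl fun σ _ ↦ sum_comp_perm σ]
        simp [Fintype.card_perm]

lemma factorial_mul_goteCoeff_sq (T : (Fin r → Fin n) → ℝ) (m : Sym (Fin n) r) :
    r ! * goteCoeff T m ^ 2 = r * ∑ a with tupleSym a = m, T a * symmetrization T a := by
  obtain ⟨a, rfl⟩ := tupleSym_surjective m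
  have permCount_ne_zero : (permCount a : ℝ) ≠ 0 := by exact_mod_cast (permCount_pos a).ne'
  have sum_mul_symmetrization : ∑ b with tupleSym b = tupleSym a, T b * symmetrization T b =
      (∑ b with tupleSym b = tupleSym a, T b) * symmetrization T a := by
    rw [Finset.sum_mul]
    exact Finset.sum_congr rfl fun b hb ↦ by
      rw [symmetrization_congr T (Finset.mem_filter.1 hb).2]
  rw [goteCoeff_tupleSym, sum_mul_symmetrization, mul_pow, Real.sq_sqrt (by positivity),
    ← mul_right_inj' permCount_ne_zero]
  field_simp
  linear_combination (-(r : ℝ) * ∑ b with tupleSym b = tupleSym a, T b) *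
    permCount_mul_symmetrization T a

theorem factorial_mul_sum_goteCoeff_sq (T : (Fin r → Fin n) → ℝ) :
    r ! * ∑ m, goteCoeff T m ^ 2 = r * ∑ a, T a * symmetrization T a := by
  simp_rw [Finset.mul_sum, factorial_mul_goteCoeff_sq, ← Finset.mul_sum]
  rw [Finset.sum_fiberwise]

theorem sum_goteCoeff_sq_le (T : (Fin r → Fin n) → ℝ) :
    ∑ m, goteCoeff T m ^ 2 ≤ r * ∑ a, T a ^ 2 := by
  have sum_mul_comp_le (σ : Equiv.Perm (Fin r)) : ∑ a, T a * T (a ∘ σ) ≤ ∑ a, T a ^ 2 := by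
    have sum_sq_comp : ∑ a, T (a ∘ σ) ^ 2 = ∑ a, T a ^ 2 :=
      Equiv.sum_comp (σ.symm.arrowCongr (Equiv.refl _)) fun a ↦ T a ^ 2
    have two_mul_sum_le : 2 * ∑ a, T a * T (a ∘ σ) ≤ ∑ a, T a ^ 2 + ∑ a, T (a ∘ σ) ^ 2 := by
      rw [Finset.mul_sum, ← Finset.sum_add_distrib]
      exact Finset.sum_le_sum fun a _ ↦ by linarith [two_mul_le_add_sq (T a) (T (a ∘ σ))]
    linarith
  have sum_mul_symmetrization_le : ∑ a, T a * symmetrization T a ≤ r ! * ∑ a, T a ^ 2 := by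
    simp_rw [symmetrization, Finset.mul_sum]
    rw [Finset.sum_comm]
    refine (Finset.sum_le_sum fun σ _ ↦ sum_mul_comp_le σ).trans_eq ?_
    simp [Fintype.card_perm, Finset.mul_sum]
  refine le_of_mul_le_mul_left ?_ (by positivity : (0 : ℝ) < r !)
  calc (r ! : ℝ) * ∑ m, goteCoeff T m ^ 2 = r * ∑ a, T a * symmetrization T a :=
        factorial_mul_sum_goteCoeff_sq T
    _ ≤ r * (r ! * ∑ a, T a ^ 2) := by gcongr
    _ = r ! * (r * ∑ a, T a ^ 2) := by ring

end GoteCovariance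

section ContractionTensor

variable {n : ℕ} (C : Matrix (Fin n) (Fin n) ℝ) (u v : Fin n → ℝ)

/-- The tensor `C ⊗ u ⊗ v`, whose pairing with a GOTE(4,n) tensor `G` is
`∑ i j, C i j * (G·u⊗v) i j`. -/
def contractionTensor (a : Fin 4 → Fin n) : ℝ :=
  C (a 0) (a 1) * u (a 2) * v (a 3)

lemma contractionTensor_add_right (w : Fin n → ℝ) :
    contractionTensor C u (v + w) = contractionTensor C u v + contractionTensor C u w :=
  funext fun _ ↦ mul_add _ _ _

lemma contractionTensor_sub_right (w : Fin n → ℝ) :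
    contractionTensor C u (v - w) = contractionTensor C u v - contractionTensor C u w :=
  funext fun _ ↦ mul_sub _ _ _

lemma sum_fin_succ_arrow {α M : Type*} [Fintype α] [AddCommMonoid M] {k : ℕ}
    (f : (Fin (k + 1) → α) → M) : ∑ a, f a = ∑ i, ∑ b : Fin k → α, f (Matrix.vecCons i b) := by
  rw [← (Fin.consEquiv fun _ ↦ α).sum_comp, Fintype.sum_prod_type]
  rfl

lemma sum_fin_four_arrow {α M : Type*} [Fintype α] [AddCommMonoid M] (f : (Fin 4 → α) → M) :
    ∑ a, f a = ∑ i, ∑ j, ∑ k, ∑ l, f ![i, j, k, l] := by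
  simp_rw [sum_fin_succ_arrow, Fintype.sum_unique]
  rfl

lemma sum_perm_fin_succ {M : Type*} [AddCommMonoid M] {k : ℕ}
    (f : Equiv.Perm (Fin (k + 1)) → M) :
    ∑ σ, f σ = ∑ p, ∑ τ : Equiv.Perm (Fin k), f (Equiv.Perm.decomposeFin.symm (p, τ)) := by
  rw [← Equiv.Perm.decomposeFin.symm.sum_comp, Fintype.sum_prod_type]

lemma decomposeFin_symm_apply_two {k : ℕ} (σ : Equiv.Perm (Fin (k + 2))) (p : Fin (k + 3)) :
    Equiv.Perm.decomposeFin.symm (p, σ) 2 = Equiv.swap 0 p (σ 1).succ :=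
  Equiv.Perm.decomposeFin_symm_apply_succ σ p 1

lemma decomposeFin_symm_apply_three {k : ℕ} (σ : Equiv.Perm (Fin (k + 3))) (p : Fin (k + 4)) :
    Equiv.Perm.decomposeFin.symm (p, σ) 3 = Equiv.swap 0 p (σ 2).succ :=
  Equiv.Perm.decomposeFin_symm_apply_succ σ p 2

lemma symmetrization_contractionTensor_self (i j k l : Fin n) :
    symmetrization (contractionTensor C u u) ![i, j, k, l] =
      2 * ((C + Cᵀ) i j * u k * u l + (C + Cᵀ) i k * u j * u l + (C + Cᵀ) i l * u j * u k +
        (C + Cᵀ) j k * u i * u l + (C + Cᵀ) j l * u i * u k + (C + Cᵀ) k l * u i * u j) := by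
  simp only [symmetrization, contractionTensor, Function.comp_apply, Matrix.add_apply,
    Matrix.transpose_apply]
  simp only [sum_perm_fin_succ, Fin.sum_univ_four, Fin.sum_univ_three, Fin.sum_univ_two,
    Fintype.sum_unique]
  simp only [Nat.succ_eq_add_one, Nat.reduceAdd, Fin.isValue, Equiv.Perm.default_eq,
    Equiv.Perm.decomposeFin_symm_of_one, Equiv.Perm.decomposeFin_symm_of_refl,
    Equiv.Perm.decomposeFin_symm_apply_zero, Equiv.Perm.decomposeFin_symm_apply_one,
    decomposeFin_symm_apply_two, decomposeFin_symm_apply_three, Equiv.swap_self, Equiv.refl_apply,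
    Equiv.swap_apply_left, Equiv.swap_apply_right, Equiv.swap_apply_def, Fin.succ_zero_eq_one,
    Fin.succ_one_eq_two, Fin.reduceSucc, Fin.reduceEq, ↓reduceIte, one_ne_zero,
    Matrix.cons_val_zero, Matrix.cons_val_one, Matrix.cons_val]
  ring

variable {C u v}

lemma sum_symmetrization_contractionTensor_self (hu : ∑ i, u i ^ 2 = 1) (i j : Fin n) :
    ∑ k, ∑ l, u k * u l * symmetrization (contractionTensor C u u) ![i, j, k, l] =
      2 * ((C + Cᵀ) i j + 2 * (u j * ((C + Cᵀ) *ᵥ u) i) + 2 * (u i * ((C + Cᵀ) *ᵥ u) j) +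
        u i * u j * (u ⬝ᵥ (C + Cᵀ) *ᵥ u)) := by
  simp_rw [symmetrization_contractionTensor_self]
  set A := C + Cᵀ
  have sum_l (k : Fin n) : ∑ l, u k * u l * (2 * (A i j * u k * u l + A i k * u j * u l +
        A i l * u j * u k + A j k * u i * u l + A j l * u i * u k + A k l * u i * u j)) =
      2 * ((A i j * u k ^ 2 + u j * (A i k * u k) + u i * (A j k * u k)) * ∑ l, u l ^ 2 +
        u k ^ 2 * (u j * (A *ᵥ u) i + u i * (A *ᵥ u) j) + u i * u j * (u k * (A *ᵥ u) k)) := by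
    simp only [Matrix.mulVec, dotProduct, Finset.mul_sum, ← Finset.sum_add_distrib]
    exact Finset.sum_congr rfl fun l _ ↦ by ring
  simp_rw [sum_l, hu, mul_one, ← Finset.mul_sum, Finset.sum_add_distrib, ← Finset.mul_sum,
    ← Finset.sum_mul, hu]
  simp only [Matrix.mulVec, dotProduct]
  ring

lemma two_mul_sum_mul_eq_sum_add_transpose_mul {ι : Type*} [Fintype ι] (C : Matrix ι ι ℝ)
    {B : Matrix ι ι ℝ} (hB : B.IsSymm) :
    2 * ∑ i, ∑ j, C i j * B i j = ∑ i, ∑ j, (C + Cᵀ) i j * B i j := by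
  have sum_transpose : ∑ i, ∑ j, Cᵀ i j * B i j = ∑ i, ∑ j, C i j * B i j := by
    rw [Finset.sum_comm]
    simp_rw [Matrix.transpose_apply, hB.apply]
  simp_rw [Matrix.add_apply, add_mul, Finset.sum_add_distrib, sum_transpose, two_mul]

lemma sum_mul_self_add_mulVec {ι : Type*} [Fintype ι] {A : Matrix ι ι ℝ} (hA : A.IsSymm)
    (u : ι → ℝ) :
    ∑ i, ∑ j, A i j * (A i j + 2 * (u j * (A *ᵥ u) i) + 2 * (u i * (A *ᵥ u) j) +
        u i * u j * (u ⬝ᵥ A *ᵥ u)) =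
      ∑ i, ∑ j, A i j ^ 2 + 4 * ∑ i, (A *ᵥ u) i ^ 2 + (u ⬝ᵥ A *ᵥ u) ^ 2 := by
  set w := A *ᵥ u
  have sum_left : ∑ i, ∑ j, A i j * (u j * w i) = ∑ i, w i ^ 2 :=
    Finset.sum_congr rfl fun i _ ↦
      calc ∑ j, A i j * (u j * w i) = (∑ j, A i j * u j) * w i := by
            simp only [Finset.sum_mul, mul_assoc]
        _ = w i ^ 2 := (sq (w i)).symm
  have sum_right : ∑ i, ∑ j, A i j * (u i * w j) = ∑ i, w i ^ 2 := by
    rw [Finset.sum_comm, ← sum_left]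
    simp_rw [hA.apply]
  have sum_both : ∑ i, ∑ j, A i j * (u i * u j) = u ⬝ᵥ w := by
    simp only [w, Matrix.mulVec, dotProduct, Finset.mul_sum]
    exact Finset.sum_congr rfl fun i _ ↦ Finset.sum_congr rfl fun j _ ↦ mul_left_comm ..
  calc _ = ∑ i, ∑ j, A i j ^ 2 + 2 * ∑ i, ∑ j, A i j * (u j * w i) +
          2 * ∑ i, ∑ j, A i j * (u i * w j) + (u ⬝ᵥ w) * ∑ i, ∑ j, A i j * (u i * u j) := by
        simp only [Finset.mul_sum, ← Finset.sum_add_distrib]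
        exact Finset.sum_congr rfl fun i _ ↦ Finset.sum_congr rfl fun j _ ↦ by ring
    _ = _ := by
        rw [sum_left, sum_right, sum_both]
        ring

lemma sum_contractionTensor_self_mul_symmetrization (hu : ∑ i, u i ^ 2 = 1) :
    ∑ a, contractionTensor C u u a * symmetrization (contractionTensor C u u) a =
      ∑ i, ∑ j, (C + Cᵀ) i j ^ 2 + 4 * ∑ i, ((C + Cᵀ) *ᵥ u) i ^ 2 +
        (u ⬝ᵥ (C + Cᵀ) *ᵥ u) ^ 2 := by
  set A := C + Cᵀ
  set B : Matrix (Fin n) (Fin n) ℝ := .of fun i j ↦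
    A i j + 2 * (u j * (A *ᵥ u) i) + 2 * (u i * (A *ᵥ u) j) + u i * u j * (u ⬝ᵥ A *ᵥ u)
  have A_isSymm : A.IsSymm := Matrix.isSymm_add_transpose_self C
  have B_isSymm : B.IsSymm := .ext fun i j ↦ by
    simp only [B, Matrix.of_apply, A_isSymm.apply i j]
    ring
  calc ∑ a, contractionTensor C u u a * symmetrization (contractionTensor C u u) a
      = ∑ i, ∑ j, C i j *
          ∑ k, ∑ l, u k * u l * symmetrization (contractionTensor C u u) ![i, j, k, l] := by
        simp_rw [sum_fin_four_arrow, Finset.mul_sum, ← mul_assoc]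
        rfl
    _ = ∑ i, ∑ j, C i j * (2 * B i j) := by
        simp_rw [sum_symmetrization_contractionTensor_self hu]
        rfl
    _ = 2 * ∑ i, ∑ j, C i j * B i j := by
        simp_rw [mul_left_comm _ (2 : ℝ), ← Finset.mul_sum]
    _ = ∑ i, ∑ j, A i j * B i j := two_mul_sum_mul_eq_sum_add_transpose_mul C B_isSymm
    _ = _ := sum_mul_self_add_mulVec A_isSymm u

lemma six_mul_sum_goteCoeff_contractionTensor_self_sq (hu : ∑ i, u i ^ 2 = 1) :
    6 * ∑ m, goteCoeff (contractionTensor C u u) m ^ 2 =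
      ∑ i, ∑ j, (C + Cᵀ) i j ^ 2 + 4 * ∑ i, ((C + Cᵀ) *ᵥ u) i ^ 2 +
        (u ⬝ᵥ (C + Cᵀ) *ᵥ u) ^ 2 := by
  have variance_eq := factorial_mul_sum_goteCoeff_sq (contractionTensor C u u)
  rw [sum_contractionTensor_self_mul_symmetrization hu, show Nat.factorial 4 = 24 from rfl]
    at variance_eq
  push_cast at variance_eq
  linarith

lemma sum_sq_le_three_mul_sum_goteCoeff_contractionTensor_self_sq
    (hu : ∑ i, u i ^ 2 = 1) (hC : ∀ i j, 0 ≤ C i j * C j i) :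
    ∑ i, ∑ j, C i j ^ 2 ≤ 3 * ∑ m, goteCoeff (contractionTensor C u u) m ^ 2 := by
  have sum_sq_transpose : ∑ i, ∑ j, C j i ^ 2 = ∑ i, ∑ j, C i j ^ 2 := Finset.sum_comm
  have two_mul_le : 2 * ∑ i, ∑ j, C i j ^ 2 ≤ ∑ i, ∑ j, (C + Cᵀ) i j ^ 2 := by
    calc 2 * ∑ i, ∑ j, C i j ^ 2 = ∑ i, ∑ j, (C i j ^ 2 + C j i ^ 2) := by
          simp_rw [Finset.sum_add_distrib, sum_sq_transpose, two_mul]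
      _ ≤ ∑ i, ∑ j, (C + Cᵀ) i j ^ 2 := by
          gcongr with i _ j _
          rw [Matrix.add_apply, Matrix.transpose_apply]
          linarith [hC i j, add_sq (C i j) (C j i)]
  have formula := six_mul_sum_goteCoeff_contractionTensor_self_sq (C := C) hu
  have : 0 ≤ 4 * ∑ i, ((C + Cᵀ) *ᵥ u) i ^ 2 := by positivity
  linarith [sq_nonneg (u ⬝ᵥ (C + Cᵀ) *ᵥ u)]

lemma sum_contractionTensor_sq :
    ∑ a, contractionTensor C u v a ^ 2 =
      (∑ i, ∑ j, C i j ^ 2) * (∑ i, u i ^ 2) * ∑ i, v i ^ 2 := by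
  simp_rw [sum_fin_four_arrow, contractionTensor, mul_pow]
  simp [← Finset.mul_sum, ← Finset.sum_mul]

lemma abs_sum_goteCoeff_contractionTensor_sq_sub_le (hu : ∑ i, u i ^ 2 = 1)
    (hv : ∑ i, v i ^ 2 = 1) :
    |∑ m, goteCoeff (contractionTensor C u v) m ^ 2 -
        ∑ m, goteCoeff (contractionTensor C u u) m ^ 2| ≤
      8 * √(∑ i, (u i - v i) ^ 2) * ∑ i, ∑ j, C i j ^ 2 := by
  set D := ∑ i, ∑ j, C i j ^ 2
  have factor : ∑ m, goteCoeff (contractionTensor C u v) m ^ 2 -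
      ∑ m, goteCoeff (contractionTensor C u u) m ^ 2 =
      ∑ m, goteCoeff (contractionTensor C u (v - u)) m *
        goteCoeff (contractionTensor C u (v + u)) m := by
    rw [contractionTensor_sub_right, contractionTensor_add_right, map_sub, map_add,
      ← Finset.sum_sub_distrib]
    exact Finset.sum_congr rfl fun m _ ↦ by rw [Pi.sub_apply, Pi.add_apply]; ring
  have sum_sq_le (w : Fin n → ℝ) :
      ∑ m, goteCoeff (contractionTensor C u w) m ^ 2 ≤ 4 * (D * ∑ i, w i ^ 2) := by
    simpa [sum_contractionTensor_sq, hu] using sum_goteCoeff_sq_le (contractionTensor C u w)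
  have sum_add_sq_le : ∑ i, (v + u) i ^ 2 ≤ 4 := by
    calc ∑ i, (v + u) i ^ 2 ≤ ∑ i, 2 * (v i ^ 2 + u i ^ 2) :=
          Finset.sum_le_sum fun i _ ↦ add_sq_le
      _ = 4 := by rw [← Finset.mul_sum, Finset.sum_add_distrib, hu, hv]; norm_num
  have sum_sub_sq : ∑ i, (v - u) i ^ 2 = ∑ i, (u i - v i) ^ 2 :=
    Finset.sum_congr rfl fun i _ ↦ sub_sq_comm (v i) (u i)
  rw [factor]
  refine abs_le_of_sq_le_sq ?_ (by positivity)
  calc (∑ m, goteCoeff (contractionTensor C u (v - u)) m *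
        goteCoeff (contractionTensor C u (v + u)) m) ^ 2
      ≤ (∑ m, goteCoeff (contractionTensor C u (v - u)) m ^ 2) *
          ∑ m, goteCoeff (contractionTensor C u (v + u)) m ^ 2 :=
        Finset.sum_mul_sq_le_sq_mul_sq ..
    _ ≤ (4 * (D * ∑ i, (v - u) i ^ 2)) * (4 * (D * 4)) := by
        gcongr
        · exact sum_sq_le _
        · exact (sum_sq_le _).trans (by gcongr)
    _ = (8 * √(∑ i, (u i - v i) ^ 2) * D) ^ 2 := by
        rw [sum_sub_sq, mul_pow, mul_pow, Real.sq_sqrt (by positivity)]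
        ring

end ContractionTensor

section MixedContraction

variable {n : ℕ}

/-- The upper-triangular matrix with entries `c` on and above the diagonal. -/
def upperTriangularMatrix (c : {p : Fin n × Fin n // p.1 ≤ p.2} → ℝ) :
    Matrix (Fin n) (Fin n) ℝ :=
  .of fun i j ↦ if h : i ≤ j then c ⟨(i, j), h⟩ else 0

lemma upperTriangularMatrix_of_le (c : {p : Fin n × Fin n // p.1 ≤ p.2} → ℝ) {i j : Fin n}
    (h : i ≤ j) : upperTriangularMatrix c i j = c ⟨(i, j), h⟩ :=
  dif_pos h

lemma upperTriangularMatrix_of_lt (c : {p : Fin n × Fin n // p.1 ≤ p.2} → ℝ) {i j : Fin n}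
    (h : j < i) : upperTriangularMatrix c i j = 0 :=
  dif_neg h.not_ge

lemma upperTriangularMatrix_mul_transpose_nonneg (c : {p : Fin n × Fin n // p.1 ≤ p.2} → ℝ)
    (i j : Fin n) : 0 ≤ upperTriangularMatrix c i j * upperTriangularMatrix c j i := by
  rcases lt_trichotomy i j with h | rfl | h
  · rw [upperTriangularMatrix_of_lt c h, mul_zero]
  · exact mul_self_nonneg _
  · rw [upperTriangularMatrix_of_lt c h, zero_mul]

lemma sum_upperTriangularMatrix_mul (c : {p : Fin n × Fin n // p.1 ≤ p.2} → ℝ)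
    (A : Matrix (Fin n) (Fin n) ℝ) :
    ∑ i, ∑ j, upperTriangularMatrix c i j * A i j = ∑ p, c p * A p.1.1 p.1.2 := by
  rw [← Fintype.sum_prod_type']
  symm
  refine Finset.sum_of_injOn Subtype.val Subtype.val_injective.injOn (by simp) ?_ ?_
  · rintro ⟨i, j⟩ - h
    have hij : j < i := by simpa using h
    rw [upperTriangularMatrix_of_lt c hij, zero_mul]
  · rintro ⟨⟨i, j⟩, hij⟩ -
    rw [upperTriangularMatrix_of_le c hij]

lemma sum_upperTriangularMatrix_sq (c : {p : Fin n × Fin n // p.1 ≤ p.2} → ℝ) :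
    ∑ i, ∑ j, upperTriangularMatrix c i j ^ 2 = ∑ p, c p ^ 2 := by
  simp_rw [sq, sum_upperTriangularMatrix_mul]
  exact Finset.sum_congr rfl fun p _ ↦ by rw [upperTriangularMatrix_of_le c p.2]

lemma sum_mul_mixedContraction (C : Matrix (Fin n) (Fin n) ℝ) (ω : GoteSpace 4 n)
    (u v : Fin n → ℝ) :
    ∑ i, ∑ j, C i j * mixedContraction ω u v i j = goteCoeff (contractionTensor C u v) ⬝ᵥ ω := by
  rw [← sum_mul_gote, sum_fin_four_arrow]
  simp only [mixedContraction, Finset.mul_sum]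
  congr! 4 with i _ j _ k _ l _
  simp only [contractionTensor, Matrix.cons_val]
  ring

/-- The matrix, with respect to the Gaussian coordinates, of the linear map taking `ω` to the
upper-triangular entries of the mixed contraction `G·u⊗v`. -/
noncomputable def mixedContractionMatrix (u v : Fin n → ℝ) :
    Matrix {p : Fin n × Fin n // p.1 ≤ p.2} (Sym (Fin n) 4) ℝ :=
  .of fun p ↦ goteCoeff (contractionTensor (.single p.1.1 p.1.2 1) u v)

lemma mixedContractionMatrix_mulVec (u v : Fin n → ℝ) (ω : GoteSpace 4 n) :
    mixedContractionMatrix u v *ᵥ ω = fun p ↦ mixedContraction ω u v p.1.1 p.1.2 := by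
  funext p
  change goteCoeff (contractionTensor (.single p.1.1 p.1.2 1) u v) ⬝ᵥ ω = _
  rw [← sum_mul_mixedContraction]
  simp [Matrix.single_apply, ite_and]

lemma vecMul_mixedContractionMatrix (c : {p : Fin n × Fin n // p.1 ≤ p.2} → ℝ)
    (u v : Fin n → ℝ) :
    c ᵥ* mixedContractionMatrix u v =
      goteCoeff (contractionTensor (upperTriangularMatrix c) u v) := by
  refine dotProduct_eq _ _ fun ω ↦ ?_
  rw [← Matrix.dotProduct_mulVec, mixedContractionMatrix_mulVec, ← sum_mul_mixedContraction,
    sum_upperTriangularMatrix_mul]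
  rfl

lemma mixedUpperLaw_eq_map_mulVec (u v : Fin n → ℝ) :
    mixedUpperLaw n u v =
      (Measure.pi fun _ ↦ gaussianReal 0 1).map (mixedContractionMatrix u v *ᵥ ·) := by
  simp_rw [mixedContractionMatrix_mulVec]
  rfl

variable {u v : Fin n → ℝ}

lemma sum_sq_le_three_mul_sum_vecMul_mixedContractionMatrix_self_sq (hu : ∑ i, u i ^ 2 = 1)
    (c : {p : Fin n × Fin n // p.1 ≤ p.2} → ℝ) :
    ∑ p, c p ^ 2 ≤ 3 * ∑ m, (c ᵥ* mixedContractionMatrix u u) m ^ 2 := by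
  rw [← sum_upperTriangularMatrix_sq, vecMul_mixedContractionMatrix]
  exact sum_sq_le_three_mul_sum_goteCoeff_contractionTensor_self_sq hu
    (upperTriangularMatrix_mul_transpose_nonneg c)

lemma vecMul_mixedContractionMatrix_self_injective (hu : ∑ i, u i ^ 2 = 1) :
    Function.Injective (mixedContractionMatrix u u).vecMul := by
  refine (injective_iff_map_eq_zero (mixedContractionMatrix u u).vecMulLinear).2 fun c hc ↦ ?_
  have sum_sq_le := sum_sq_le_three_mul_sum_vecMul_mixedContractionMatrix_self_sq hu c
  rw [Matrix.vecMulLinear_apply] at hc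
  have sum_sq_eq : ∑ p, c p ^ 2 = 0 :=
    le_antisymm (by simpa [hc] using sum_sq_le) (Finset.sum_nonneg fun p _ ↦ sq_nonneg _)
  rw [Finset.sum_eq_zero_iff_of_nonneg fun p _ ↦ sq_nonneg _] at sum_sq_eq
  exact funext fun p ↦ pow_eq_zero_iff two_ne_zero |>.1 (sum_sq_eq p (Finset.mem_univ p))

lemma abs_sum_vecMul_mixedContractionMatrix_sq_sub_le (hu : ∑ i, u i ^ 2 = 1)
    (hv : ∑ i, v i ^ 2 = 1) (c : {p : Fin n × Fin n // p.1 ≤ p.2} → ℝ) :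
    |∑ m, (c ᵥ* mixedContractionMatrix u v) m ^ 2 -
        ∑ m, (c ᵥ* mixedContractionMatrix u u) m ^ 2| ≤
      24 * √(∑ i, (u i - v i) ^ 2) * ∑ m, (c ᵥ* mixedContractionMatrix u u) m ^ 2 := by
  calc _ ≤ 8 * √(∑ i, (u i - v i) ^ 2) * ∑ p, c p ^ 2 := by
        simpa only [vecMul_mixedContractionMatrix, sum_upperTriangularMatrix_sq] using
          abs_sum_goteCoeff_contractionTensor_sq_sub_le (C := upperTriangularMatrix c) hu hv
    _ ≤ 8 * √(∑ i, (u i - v i) ^ 2) *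
          (3 * ∑ m, (c ᵥ* mixedContractionMatrix u u) m ^ 2) := by
        gcongr
        exact sum_sq_le_three_mul_sum_vecMul_mixedContractionMatrix_self_sq hu c
    _ = _ := by ring

end MixedContraction

/-- **Total variation bound between mixed-contraction laws.**
There is an absolute constant `C > 0` with
`d_TV(ℙ_{u,v}, ℙ_{u,u}) ≤ C·n·‖u − v‖₂` for all `n ≥ 1` and unit vectors `u, v ∈ ℝⁿ`. -/
theorem tv_distance_mixed_contractions :
    ∃ C : ℝ, 0 < C ∧ ∀ n : ℕ, 1 ≤ n → ∀ u v : Fin n → ℝ,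
      (∑ i, u i ^ 2 = 1) → (∑ i, v i ^ 2 = 1) →
      tvDist (mixedUpperLaw n u v) (mixedUpperLaw n u u)
        ≤ C * n * Real.sqrt (∑ i, (u i - v i) ^ 2) := by
  refine ⟨48, by norm_num, fun n _ u v hu hv ↦ ?_⟩
  have sqrt_card_le : √(Fintype.card {p : Fin n × Fin n // p.1 ≤ p.2}) ≤ n := by
    refine Real.sqrt_le_left (Nat.cast_nonneg n) |>.2 ?_
    have := Fintype.card_subtype_le fun p : Fin n × Fin n ↦ p.1 ≤ p.2
    rw [Fintype.card_prod, Fintype.card_fin, ← sq] at this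
    exact_mod_cast this
  rw [mixedUpperLaw_eq_map_mulVec, mixedUpperLaw_eq_map_mulVec]
  calc _ ≤ 2 * √(Fintype.card {p : Fin n × Fin n // p.1 ≤ p.2}) *
          (24 * √(∑ i, (u i - v i) ^ 2)) :=
        tvDist_map_mulVec_pi_gaussianReal_le (vecMul_mixedContractionMatrix_self_injective hu)
          (abs_sum_vecMul_mixedContractionMatrix_sq_sub_le hu hv)
    _ ≤ 2 * n * (24 * √(∑ i, (u i - v i) ^ 2)) := by gcongr
    _ = 48 * n * √(∑ i, (u i - v i) ^ 2) := by ring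
end

section
/- Fix integers r ≥ 3 and n ≥ 1, let G be a GOTE(r,n) tensor, w ∈ ℝⁿ a unit vector and M = G·w^{⊗(r−2)} the pure contraction; set α = √((r−2)(r−3)/(r−1)), β = √((r−2)/(r−1)), θ = √(1/(r−1)). On an auxiliary probability space let U be a standard Gaussian random variable, V = (V₁,…,V_n) a vector of n independent standard Gaussians, and Z a GOE(n) matrix (a random real symmetric n×n matrix whose entries (Z_{ij})_{i ≤ j} are independent centered Gaussians with Var(Z_{ij}) = 1 for i < j and Var(Z_{ii}) = 2, and Z_{ji} = Z_{ij}), with U, V, Z mutually independent. Define X = αU·wwᵀ + β(Vwᵀ + wVᵀ) + θZ. Then M and X are equal in distribution: the law of the random symmetric matrix M equals the law of X. -/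
open MeasureTheory ProbabilityTheory Filter

/-- Index set for the upper-triangular entries of an `n × n` matrix. -/
abbrev UpperIdx (n : ℕ) : Type := {p : Fin n × Fin n // p.1 ≤ p.2}

/-- The law of the upper-triangular entries of a GOE(n) matrix: independent centered
Gaussians with variance `2` on the diagonal and `1` off the diagonal. -/
noncomputable def goeMeasure (n : ℕ) : Measure (UpperIdx n → ℝ) :=
  Measure.pi fun p => gaussianReal 0 (if p.1.1 = p.1.2 then 2 else 1)

/-- The GOE(n) matrix built from its upper-triangular entries. -/
noncomputable def goeMatrix {n : ℕ} (z : UpperIdx n → ℝ) : Matrix (Fin n) (Fin n) ℝ :=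
  fun i j => if h : i ≤ j then z ⟨(i, j), h⟩ else z ⟨(j, i), (not_le.mp h).le⟩

/-!
Both matrices are linear images of centered Gaussian vectors, so it suffices to compare the
covariances of their entries. For the GOTE tensor, contractions with rank-one tensors `⨂ uₖ` and
`⨂ vₖ` have covariance `r / r!` times the permanent of the matrix `(⟨uₖ, vₗ⟩)`. For the pure
contraction these vectors are two basis vectors followed by `r - 2` copies of the unit vector `w`,
so this matrix consists of a `2 × 2` block of Kronecker deltas, constant borders given by
coordinates of `w`, and ones elsewhere. The permutations contributing to its permanent are sorted
by whether both, one or none of the first two columns are matched inside the block; the three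
classes produce `θ²`, `β²` and `α²`.
-/

open scoped Nat

section Permanent

open Equiv in
lemma sum_perm_apply_zero_one {R : Type*} [Semiring R] {s : ℕ}
    (F : Fin (s + 2) → Fin (s + 2) → R) :
    ∑ σ : Perm (Fin (s + 2)), F (σ 0) (σ 1) = s ! * ∑ p, ∑ q, if p = q then 0 else F p q := by
  have sum_erase (p : Fin (s + 2)) :
      ∑ q : Fin (s + 1), F p (swap 0 p q.succ) = ∑ q, if p = q then 0 else F p q := by
    have ne_swap_succ (q : Fin (s + 1)) : p ≠ swap 0 p q.succ := by
      rw [ne_eq, ← swap_apply_eq_iff, swap_apply_right]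
      exact (Fin.succ_ne_zero q).symm
    rw [← Equiv.sum_comp (swap 0 p) fun q => if p = q then 0 else F p q,
      Fin.sum_univ_succ (n := s + 1)]
    simp [ne_swap_succ]
  have sum_apply_zero (f : Fin (s + 1) → R) :
      ∑ τ : Perm (Fin (s + 1)), f (τ 0) = s ! * ∑ q, f q := by
    rw [← Perm.decomposeFin.symm.sum_comp, Fintype.sum_prod_type]
    simp [Fintype.card_perm, Finset.mul_sum]
  rw [← Perm.decomposeFin.symm.sum_comp, Fintype.sum_prod_type, Finset.mul_sum]
  refine Finset.sum_congr rfl fun p _ => ?_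
  simpa [← sum_erase] using sum_apply_zero fun q => F p (swap 0 p q.succ)

lemma permanent_eq_of_forall_col_eq {R : Type*} [CommSemiring R] {s : ℕ}
    (A : Matrix (Fin (s + 2)) (Fin (s + 2)) R) (a : Fin (s + 2) → R)
    (ha : ∀ p (q : Fin s), A p q.succ.succ = a p) :
    A.permanent = s ! * ∑ p, ∑ q, if p = q then 0 else
      A p 0 * A q 1 * ∏ k, if k = p ∨ k = q then 1 else a k := by
  rw [Matrix.permanent, ← sum_perm_apply_zero_one]
  refine Finset.sum_congr rfl fun σ _ => ?_
  rw [← Equiv.prod_comp σ fun k => if k = σ 0 ∨ k = σ 1 then 1 else a k]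
  simp [Fin.prod_univ_succ, ha, mul_assoc, Fin.succ_succ_ne_one]

lemma sum_sum_ite_eq_zero_const {ι R : Type*} [Fintype ι] [DecidableEq ι] [Ring R] (x : R) :
    ∑ p : ι, ∑ q : ι, (if p = q then 0 else x) =
      Fintype.card ι * (Fintype.card ι - 1) * x := by
  have ite_eq_sub (p q : ι) : (if p = q then 0 else x) = x - if p = q then x else 0 := by
    split_ifs <;> simp
  simp [ite_eq_sub, mul_sub, sub_mul, mul_assoc]

lemma permanent_eq_of_border {R : Type*} [CommRing R] {s : ℕ}
    (A : Matrix (Fin (s + 2)) (Fin (s + 2)) R) {b₀ b₁ c₀ c₁ : R}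
    (hb₀ : ∀ q : Fin s, A 0 q.succ.succ = b₀) (hb₁ : ∀ q : Fin s, A 1 q.succ.succ = b₁)
    (hc₀ : ∀ p : Fin s, A p.succ.succ 0 = c₀) (hc₁ : ∀ p : Fin s, A p.succ.succ 1 = c₁)
    (hA : ∀ p q : Fin s, A p.succ.succ q.succ.succ = 1) :
    A.permanent = s ! * (A 0 0 * A 1 1 + A 0 1 * A 1 0
      + s * (b₁ * c₁ * A 0 0 + b₁ * c₀ * A 0 1 + b₀ * c₁ * A 1 0 + b₀ * c₀ * A 1 1)
      + s * (s - 1) * (b₀ * b₁ * c₀ * c₁)) := by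
  have hcols (p : Fin (s + 2)) (q : Fin s) :
      A p q.succ.succ = (Fin.cons b₀ (Fin.cons b₁ fun _ => 1) : Fin (s + 2) → R) p :=
    Fin.cases (hb₀ q) (Fin.cases (hb₁ q) fun p => hA p q) p
  have one_ne_succ_succ (p : Fin s) : 1 ≠ p.succ.succ := (Fin.succ_succ_ne_one p).symm
  have zero_ne_succ {m : ℕ} (p : Fin m) : 0 ≠ p.succ := (Fin.succ_ne_zero p).symm
  rw [permanent_eq_of_forall_col_eq A _ hcols]
  simp only [Fin.sum_univ_succ, Fin.prod_univ_succ, Fin.succ_zero_eq_one, hc₀, hc₁, Fin.cons_zero,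
    Fin.cons_succ]
  simp only [↓reduceIte, zero_ne_one, or_false, one_ne_zero, or_true, Fin.succ_ne_zero,
    Fin.succ_succ_ne_one, or_self, Finset.prod_const_one, mul_one, zero_ne_succ, one_ne_succ_succ,
    Fin.succ_inj, false_or, ite_self, one_mul, Finset.sum_const, Finset.card_univ,
    Fintype.card_fin, nsmul_eq_mul, zero_add, Finset.sum_add_distrib, sum_sum_ite_eq_zero_const]
  ring

lemma prod_dotProduct_perm {ι κ R : Type*} [Fintype ι] [DecidableEq ι] [Fintype κ] [CommSemiring R]
    (u v : ι → κ → R) (σ : Equiv.Perm ι) :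
    ∏ k, u (σ k) ⬝ᵥ v k = ∑ a : ι → κ, (∏ k, u k (a k)) * ∏ k, v k (a (σ k)) := by
  simp only [dotProduct]
  rw [Finset.prod_univ_sum, Fintype.piFinset_univ,
    ← (Equiv.arrowCongr σ⁻¹ (Equiv.refl κ)).sum_comp]
  refine Finset.sum_congr rfl fun a _ => ?_
  rw [Finset.prod_mul_distrib, ← Equiv.prod_comp σ fun k => u k (a k)]
  rfl

end Permanent

section Tuples

variable {n r : ℕ}

lemma tupleSym_eq_iff (a b : Fin r → Fin n) :
    tupleSym a = tupleSym b ↔ ∃ σ : Equiv.Perm (Fin r), b ∘ σ = a := by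
  constructor
  · intro h
    have card_fiber_eq (z : Fin n) : Fintype.card {k // a k = z} = Fintype.card {k // b k = z} := by
      have hcount : Multiset.count z (List.ofFn a) = Multiset.count z (List.ofFn b) :=
        congrArg (Multiset.count z) (congrArg Subtype.val h)
      rw [← Fin.univ_val_map, ← Fin.univ_val_map, Multiset.count_map, Multiset.count_map] at hcount
      simpa [Fintype.card_subtype, Finset.card_def, eq_comm] using hcount
    let e (z : Fin n) : {k // a k = z} ≃ {k // b k = z} := Fintype.equivOfCardEq (card_fiber_eq z)
    refine ⟨((Equiv.sigmaFiberEquiv a).symm.trans (Equiv.sigmaCongrRight e)).trans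
      (Equiv.sigmaFiberEquiv b), funext fun k => ?_⟩
    exact (e (a k) ⟨k, rfl⟩).2
  · rintro ⟨σ, rfl⟩
    exact Subtype.ext (Multiset.coe_eq_coe.mpr (Equiv.Perm.ofFn_comp_perm σ b))

lemma card_perm_comp_eq_comp (a b : Fin r → Fin n) (τ : Equiv.Perm (Fin r)) :
    Finset.card {σ : Equiv.Perm (Fin r) | b ∘ σ = a ∘ τ} =
      Finset.card {σ : Equiv.Perm (Fin r) | b ∘ σ = a} := by
  refine Finset.card_equiv (Equiv.mulRight τ⁻¹) fun σ => ?_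
  simp only [Finset.mem_filter, Finset.mem_univ, true_and, Equiv.coe_mulRight, Equiv.Perm.coe_mul,
    ← Function.comp_assoc]
  exact (Equiv.comp_symm_eq τ _ _).symm

lemma permCount_mul_card_perm {a b : Fin r → Fin n} (h : tupleSym a = tupleSym b) :
    permCount b * Finset.card {σ : Equiv.Perm (Fin r) | b ∘ σ = a} = r ! := by
  have card_fiber_eq (c : Fin r → Fin n) (hc : tupleSym c = tupleSym b) :
      Finset.card {σ : Equiv.Perm (Fin r) | b ∘ σ = c} =
        Finset.card {σ : Equiv.Perm (Fin r) | b ∘ σ = a} := by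
    obtain ⟨τ, rfl⟩ := (tupleSym_eq_iff c a).mp (hc.trans h.symm)
    exact card_perm_comp_eq_comp a b τ
  calc permCount b * Finset.card {σ : Equiv.Perm (Fin r) | b ∘ σ = a}
      = ∑ c with tupleSym c = tupleSym b, Finset.card {σ : Equiv.Perm (Fin r) | b ∘ σ = c} := by
        rw [Finset.sum_congr rfl fun c hc => card_fiber_eq c (Finset.mem_filter.mp hc).2,
          Finset.sum_const, smul_eq_mul, permCount]
    _ = Fintype.card (Equiv.Perm (Fin r)) := by
        refine (Finset.card_eq_sum_card_fiberwise fun σ _ => ?_).symm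
        simpa using (tupleSym_eq_iff _ b).mpr ⟨σ, rfl⟩
    _ = r ! := by rw [Fintype.card_perm, Fintype.card_fin]

end Tuples

section Covariance

lemma covariance_eval_pi {ι : Type*} [Fintype ι] [DecidableEq ι] {μ : ι → Measure ℝ}
    [∀ i, IsProbabilityMeasure (μ i)] (hμ : ∀ i, MemLp id 2 (μ i)) (i j : ι) :
    cov[fun x => x i, fun x => x j; Measure.pi μ] = if i = j then Var[id; μ i] else 0 := by
  have memLp_eval (k : ι) : MemLp (fun x => x k) 2 (Measure.pi μ) :=
    (hμ k).comp_measurePreserving (measurePreserving_eval μ k)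
  split_ifs with hij
  · subst hij
    rw [covariance_self (memLp_eval i).aemeasurable]
    exact (measurePreserving_eval μ i).variance_fun_comp (f := id) aemeasurable_id
  · exact ((iIndepFun_pi (μ := μ) (X := fun _ => id) fun _ => aemeasurable_id).indepFun
      hij).covariance_eq_zero (memLp_eval i) (memLp_eval j)

lemma covariance_add_prod {E F : Type*} [MeasurableSpace E] [MeasurableSpace F]
    {μ : Measure E} {ν : Measure F} [IsProbabilityMeasure μ] [IsProbabilityMeasure ν]
    {f f' : E → ℝ} {g g' : F → ℝ} (hf : MemLp f 2 μ) (hf' : MemLp f' 2 μ)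
    (hg : MemLp g 2 ν) (hg' : MemLp g' 2 ν) :
    cov[fun p => f p.1 + g p.2, fun p => f' p.1 + g' p.2; μ.prod ν] =
      cov[f, f'; μ] + cov[g, g'; ν] := by
  have cov_fst : cov[fun p => f p.1, fun p => f' p.1; μ.prod ν] = cov[f, f'; μ] :=
    measurePreserving_fst.hasLaw.covariance_fun_comp hf.aemeasurable hf'.aemeasurable
  have cov_snd : cov[fun p => g p.2, fun p => g' p.2; μ.prod ν] = cov[g, g'; ν] :=
    measurePreserving_snd.hasLaw.covariance_fun_comp hg.aemeasurable hg'.aemeasurable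
  have cov_fst_snd := covariance_fst_snd_prod hf hg'
  have cov_snd_fst : cov[fun p => g p.2, fun p => f' p.1; μ.prod ν] = 0 := by
    rw [covariance_comm]
    exact covariance_fst_snd_prod hf' hg
  change cov[(fun p => f p.1) + fun p => g p.2, (fun p => f' p.1) + fun p => g' p.2; μ.prod ν] = _
  rw [covariance_add_left (hf.comp_fst ν) (hg.comp_snd μ) ((hf'.comp_fst ν).add (hg'.comp_snd μ)),
    covariance_add_right (hf.comp_fst ν) (hf'.comp_fst ν) (hg'.comp_snd μ),
    covariance_add_right (hg.comp_snd μ) (hf'.comp_fst ν) (hg'.comp_snd μ),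
    cov_fst, cov_snd, cov_fst_snd, cov_snd_fst, add_zero, zero_add]

end Covariance

section Gaussian

variable {E F V ι : Type*}
  [NormedAddCommGroup E] [NormedSpace ℝ E] [FiniteDimensional ℝ E]
  [MeasurableSpace E] [BorelSpace E]
  [NormedAddCommGroup F] [NormedSpace ℝ F] [FiniteDimensional ℝ F]
  [MeasurableSpace F] [BorelSpace F]
  [NormedAddCommGroup V] [NormedSpace ℝ V] [MeasurableSpace V] [BorelSpace V]

lemma memLp_two_of_isLinearMap (μ : Measure E) [IsGaussian μ] {f : E → ℝ} (hf : IsLinearMap ℝ f) :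
    MemLp f 2 μ :=
  IsGaussian.memLp_dual μ (hf.mk' f).toContinuousLinearMap 2 (by simp)

lemma isGaussian_ext_of_covariance_coord [Finite ι]
    (b : Module.Basis ι ℝ V) {μ ν : Measure V} [IsGaussian μ] [IsGaussian ν]
    (hmean : μ[id] = ν[id])
    (hcov : ∀ i j, cov[b.coord i, b.coord j; μ] = cov[b.coord i, b.coord j; ν]) :
    μ = ν := by
  have := Fintype.ofFinite ι
  have := Module.Finite.of_basis b
  have memLp_coord (ρ : Measure V) [IsGaussian ρ] (c : ι → ℝ) (i : ι) :
      MemLp (fun x => c i * b.coord i x) 2 ρ :=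
    (memLp_two_of_isLinearMap ρ (b.coord i).isLinear).const_mul _
  have dual_eq_sum (L : StrongDual ℝ V) : ⇑L = fun x => ∑ i, L (b i) * b.coord i x := by
    funext x
    simpa using (DFunLike.congr_fun (b.sum_dual_apply_smul_coord L.toLinearMap) x).symm
  have covariance_dual (ρ : Measure V) [IsGaussian ρ] (L L' : StrongDual ℝ V) :
      covarianceBilinDual ρ L L' =
        ∑ i, ∑ j, L' (b j) * (L (b i) * cov[b.coord i, b.coord j; ρ]) := by
    rw [covarianceBilinDual_eq_covariance IsGaussian.memLp_two_id, dual_eq_sum L, dual_eq_sum L',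
      covariance_fun_sum_fun_sum (memLp_coord ρ _) (memLp_coord ρ _), ← dual_eq_sum, ← dual_eq_sum]
    simp only [covariance_const_mul_left, covariance_const_mul_right]
  refine IsGaussian.ext_covarianceBilinDual hmean ?_
  ext L L'
  simp only [covariance_dual, hcov]

lemma map_eq_map_of_covariance_eq {κ : Type*} [Finite ι] [Finite κ]
    {μ : Measure E} {ν : Measure F} [IsGaussian μ] [IsGaussian ν]
    (hμ : μ[id] = 0) (hν : ν[id] = 0) {f : E → ι → κ → ℝ} {g : F → ι → κ → ℝ}
    (hf : IsLinearMap ℝ f) (hg : IsLinearMap ℝ g)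
    (hcov : ∀ i j k l, cov[fun x => f x i j, fun x => f x k l; μ] =
      cov[fun y => g y i j, fun y => g y k l; ν]) :
    μ.map f = ν.map g := by
  have := Fintype.ofFinite ι
  have := Fintype.ofFinite κ
  let L : E →L[ℝ] ι → κ → ℝ := (hf.mk' f).toContinuousLinearMap
  let L' : F →L[ℝ] ι → κ → ℝ := (hg.mk' g).toContinuousLinearMap
  let b : Module.Basis (Σ _ : ι, κ) ℝ (ι → κ → ℝ) := Pi.basis fun _ => Pi.basisFun ℝ κ
  have coord_eq (p : Σ _ : ι, κ) : ⇑(b.coord p) = fun A => A p.1 p.2 := by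
    funext A
    simp [b]
  have aestronglyMeasurable_coord (p : Σ _ : ι, κ) (ρ : Measure (ι → κ → ℝ)) :
      AEStronglyMeasurable (b.coord p) ρ :=
    (b.coord p).continuous_of_finiteDimensional.aestronglyMeasurable
  change μ.map L = ν.map L'
  refine isGaussian_ext_of_covariance_coord b ?_ fun p q => ?_
  · calc (μ.map L)[id] = L μ[id] := L.integral_id_map IsGaussian.integrable_id
      _ = L' ν[id] := by rw [hμ, hν, map_zero, map_zero]
      _ = (ν.map L')[id] := (L'.integral_id_map IsGaussian.integrable_id).symm
  · rw [covariance_map (aestronglyMeasurable_coord p _) (aestronglyMeasurable_coord q _)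
        (by fun_prop),
      covariance_map (aestronglyMeasurable_coord p _) (aestronglyMeasurable_coord q _)
        (by fun_prop), coord_eq, coord_eq]
    exact hcov ..

variable [Fintype ι]

instance isGaussian_pi (μ : ι → Measure ℝ) [∀ i, IsGaussian (μ i)] : IsGaussian (Measure.pi μ) := by
  have hlaw : HasGaussianLaw (fun (x : ι → ℝ) i => x i) (Measure.pi μ) :=
    iIndepFun.hasGaussianLaw (fun i => (measurePreserving_eval μ i).hasLaw.hasGaussianLaw)
      (iIndepFun_pi (μ := μ) (X := fun _ => id) fun _ => aemeasurable_id)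
  simpa using hlaw.isGaussian_map

lemma covariance_const_mul_gaussianReal (c d : ℝ) :
    cov[fun x => c * x, fun x => d * x; gaussianReal 0 1] = c * d := by
  rw [covariance_const_mul_left, covariance_const_mul_right, covariance_self aemeasurable_id',
    variance_fun_id_gaussianReal, NNReal.coe_one, mul_one]

lemma covariance_dotProduct_pi_gaussianReal (c d : ι → ℝ) :
    cov[fun x => c ⬝ᵥ x, fun x => d ⬝ᵥ x; Measure.pi fun _ => gaussianReal 0 1] = c ⬝ᵥ d := by
  classical
  have memLp_summand (c : ι → ℝ) (i : ι) :
      MemLp (fun x => c i * x i) 2 (Measure.pi fun _ => gaussianReal 0 1) :=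
    (memLp_two_of_isLinearMap _ (LinearMap.proj i).isLinear).const_mul _
  simp only [dotProduct]
  rw [covariance_fun_sum_fun_sum (memLp_summand c) (memLp_summand d)]
  simp only [covariance_const_mul_left, covariance_const_mul_right,
    covariance_eval_pi fun _ => IsGaussian.memLp_two_id]
  simp [mul_comm]

lemma integral_id_of_measurePreserving {μ : Measure E} {ν : Measure F} [IsGaussian μ]
    {L : E →L[ℝ] F} (hL : MeasurePreserving L μ ν) : L μ[id] = ν[id] := by
  rw [← hL.map_eq]
  exact (L.integral_id_map IsGaussian.integrable_id).symm

lemma integral_id_pi_eq_zero {μ : ι → Measure ℝ} [∀ i, IsGaussian (μ i)]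
    (hμ : ∀ i, (μ i)[id] = 0) : (Measure.pi μ)[id] = 0 :=
  funext fun i => (integral_id_of_measurePreserving
    (L := (.proj i : (ι → ℝ) →L[ℝ] ℝ)) (measurePreserving_eval μ i)).trans (hμ i)

lemma integral_id_prod_eq_zero {μ : Measure E} {ν : Measure F} [IsGaussian μ] [IsGaussian ν]
    (hμ : μ[id] = 0) (hν : ν[id] = 0) : (μ.prod ν)[id] = 0 :=
  Prod.ext
    ((integral_id_of_measurePreserving (L := .fst ℝ E F) measurePreserving_fst).trans hμ)
    ((integral_id_of_measurePreserving (L := .snd ℝ E F) measurePreserving_snd).trans hν)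

end Gaussian

local notation "δ" => (1 : Matrix (Fin _) (Fin _) ℝ)

/-- The covariance of the `(i, j)` and `(k, l)` entries of `αU·wwᵀ + β(Vwᵀ + wVᵀ) + θZ`, as a
function of the squared coefficients `a = α²`, `b = β²`, `c = θ²`. -/
noncomputable def rankTwoCovariance {n : ℕ} (w : Fin n → ℝ) (a b c : ℝ) (i j k l : Fin n) : ℝ :=
  a * (w i * w j * w k * w l)
    + b * (w j * w l * δ i k + w j * w k * δ i l + w i * w l * δ j k + w i * w k * δ j l)
    + c * (δ i k * δ j l + δ i l * δ j k)

lemma single_one_dotProduct_single_one {n : ℕ} (i j : Fin n) :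
    Pi.single i (1 : ℝ) ⬝ᵥ Pi.single j 1 = δ i j := by
  simp [Matrix.one_apply, Pi.single_apply, eq_comm]

section Gote

variable {n r : ℕ}

instance isGaussian_goteMeasure : IsGaussian (goteMeasure r n) :=
  isGaussian_pi _

lemma integral_id_goteMeasure (r n : ℕ) : (goteMeasure r n)[id] = 0 :=
  integral_id_pi_eq_zero fun _ => integral_id_gaussianReal

lemma isLinearMap_gote (a : Fin r → Fin n) : IsLinearMap ℝ fun ω : GoteSpace r n => gote ω a where
  map_add _ _ := mul_add ..
  map_smul _ _ := mul_left_comm ..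

lemma covariance_gote (a b : Fin r → Fin n) :
    cov[fun ω => gote ω a, fun ω => gote ω b; goteMeasure r n] =
      r / r ! * Finset.card {σ : Equiv.Perm (Fin r) | a ∘ σ = b} := by
  simp only [gote, covariance_const_mul_left, covariance_const_mul_right, goteMeasure]
  rw [covariance_eval_pi fun _ => IsGaussian.memLp_two_id]
  split_ifs with hab
  · have permCount_eq : permCount b = permCount a := by rw [permCount, permCount, hab]
    have hcard := permCount_mul_card_perm hab.symm
    have hne : (permCount a : ℝ) ≠ 0 ∧
        (Finset.card {σ : Equiv.Perm (Fin r) | a ∘ σ = b} : ℝ) ≠ 0 := by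
      rw [← mul_ne_zero_iff]
      exact_mod_cast hcard ▸ Nat.factorial_ne_zero r
    obtain ⟨permCount_ne_zero, card_ne_zero⟩ := hne
    rw [variance_id_gaussianReal, permCount_eq, NNReal.coe_one, mul_one,
      Real.mul_self_sqrt (by positivity), ← hcard, Nat.cast_mul]
    field_simp
  · have forall_comp_ne (σ : Equiv.Perm (Fin r)) : a ∘ σ ≠ b :=
      fun h => hab ((tupleSym_eq_iff b a).mpr ⟨σ, h⟩).symm
    simp [forall_comp_ne]

/-- The full contraction `G · (u₀ ⊗ ⋯ ⊗ u_{r-1})` of the GOTE tensor with a rank-one tensor. -/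
noncomputable def goteContraction (ω : GoteSpace r n) (u : Fin r → Fin n → ℝ) : ℝ :=
  ∑ a, gote ω a * ∏ k, u k (a k)

lemma isLinearMap_goteContraction (u : Fin r → Fin n → ℝ) :
    IsLinearMap ℝ fun ω : GoteSpace r n => goteContraction ω u where
  map_add ω ω' := by
    simp only [goteContraction, (isLinearMap_gote _).map_add, add_mul, Finset.sum_add_distrib]
  map_smul c ω := by
    simp only [goteContraction, (isLinearMap_gote _).map_smul, smul_eq_mul, mul_assoc,
      Finset.mul_sum]

lemma covariance_goteContraction (u v : Fin r → Fin n → ℝ) :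
    cov[fun ω => goteContraction ω u, fun ω => goteContraction ω v; goteMeasure r n] =
      r / r ! * (Matrix.of fun k l => u k ⬝ᵥ v l).permanent := by
  have memLp_summand (u : Fin r → Fin n → ℝ) (a : Fin r → Fin n) :
      MemLp (fun ω => gote ω a * ∏ k, u k (a k)) 2 (goteMeasure r n) :=
    (memLp_two_of_isLinearMap _ (isLinearMap_gote a)).mul_const _
  calc cov[fun ω => goteContraction ω u, fun ω => goteContraction ω v; goteMeasure r n]
      = ∑ a, ∑ b, (r / r ! * ∑ σ : Equiv.Perm (Fin r), if a ∘ σ = b then 1 else 0) *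
          (∏ k, u k (a k)) * ∏ k, v k (b k) := by
        simp only [goteContraction]
        rw [covariance_fun_sum_fun_sum (memLp_summand u) (memLp_summand v)]
        simp only [covariance_mul_const_left, covariance_mul_const_right, covariance_gote,
          Finset.card_filter, Nat.cast_sum, Nat.cast_ite, Nat.cast_one, Nat.cast_zero]
    _ = r / r ! * ∑ a : Fin r → Fin n, ∑ σ : Equiv.Perm (Fin r),
          (∏ k, u k (a k)) * ∏ k, v k (a (σ k)) := by
        simp only [mul_assoc, ← Finset.mul_sum, Finset.sum_mul]
        congr! 2 with a
        rw [Finset.sum_comm]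
        simp [Finset.mul_sum]
    _ = r / r ! * (Matrix.of fun k l => u k ⬝ᵥ v l).permanent := by
        rw [Finset.sum_comm]
        simp only [Matrix.permanent, Matrix.of_apply, prod_dotProduct_perm]

lemma glue_eq_cons {s : ℕ} (i j : Fin n) (f : Fin s → Fin n) :
    glue (r := s + 2) i j f = Fin.cons i (Fin.cons j f : Fin (s + 1) → Fin n) := by
  funext t
  refine Fin.cases ?_ (Fin.cases ?_ fun t => ?_) t <;> simp [glue]

lemma sum_cons_cons {s : ℕ} (F : (Fin (s + 2) → Fin n) → ℝ) :
    ∑ a, F a =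
      ∑ i, ∑ j, ∑ f : Fin s → Fin n, F (Fin.cons i (Fin.cons j f : Fin (s + 1) → Fin n)) := by
  simp only [← (Fin.consEquiv fun _ => Fin n).sum_comp, Fintype.sum_prod_type]
  rfl

lemma pureContraction_eq_goteContraction {s : ℕ} (ω : GoteSpace (s + 2) n) (w : Fin n → ℝ)
    (i j : Fin n) :
    pureContraction ω w i j =
      goteContraction ω (Fin.cons (Pi.single i 1) (Fin.cons (Pi.single j 1) fun _ => w)) := by
  change ∑ f : Fin s → Fin n, gote ω (glue i j f) * ∏ k : Fin s, w (f k) = _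
  rw [goteContraction, sum_cons_cons]
  simp [Fin.prod_univ_succ, Pi.single_apply, glue_eq_cons]

lemma isLinearMap_pureContraction {s : ℕ} (w : Fin n → ℝ) :
    IsLinearMap ℝ fun (ω : GoteSpace (s + 2) n) i j => pureContraction ω w i j := by
  constructor <;> intros <;> ext i j <;>
    simp [pureContraction_eq_goteContraction, (isLinearMap_goteContraction _).map_add,
      (isLinearMap_goteContraction _).map_smul]

lemma covariance_pureContraction {s : ℕ} {w : Fin n → ℝ} (hw : ∑ i, w i ^ 2 = 1)
    (i j k l : Fin n) :
    cov[fun ω => pureContraction ω w i j, fun ω => pureContraction ω w k l;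
      goteMeasure (s + 2) n] =
      rankTwoCovariance w (s * (s - 1) / (s + 1)) (s / (s + 1)) (1 / (s + 1)) i j k l := by
  have dotProduct_self : w ⬝ᵥ w = 1 := by simpa only [dotProduct, ← sq] using hw
  have factorial_ne_zero : (s ! : ℝ) ≠ 0 := mod_cast s.factorial_ne_zero
  simp only [pureContraction_eq_goteContraction]
  rw [covariance_goteContraction, permanent_eq_of_border (b₀ := w i) (b₁ := w j) (c₀ := w k)
    (c₁ := w l)]
  · simp only [Matrix.of_apply, Fin.cons_zero, Fin.cons_one, single_one_dotProduct_single_one,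
      rankTwoCovariance, Nat.factorial_succ]
    push_cast
    field_simp
    ring
  all_goals simp [dotProduct_self]

end Gote

section RankTwoModel

variable {n : ℕ}

instance isGaussian_goeMeasure : IsGaussian (goeMeasure n) :=
  isGaussian_pi _

lemma isLinearMap_goeMatrix (i j : Fin n) :
    IsLinearMap ℝ fun z : UpperIdx n → ℝ => goeMatrix z i j := by
  constructor <;> intros <;> simp only [goeMatrix] <;> split_ifs <;> rfl

lemma covariance_goeMatrix (i j k l : Fin n) :
    cov[fun z => goeMatrix z i j, fun z => goeMatrix z k l; goeMeasure n] =
      δ i k * δ j l + δ i l * δ j k := by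
  have covariance_eval (p q : UpperIdx n) :
      cov[fun z => z p, fun z => z q; goeMeasure n] =
        δ p.1.1 q.1.1 * δ p.1.2 q.1.2 + δ p.1.1 q.1.2 * δ p.1.2 q.1.1 := by
    rw [goeMeasure, covariance_eval_pi fun _ => IsGaussian.memLp_two_id]
    obtain ⟨⟨i, j⟩, hij⟩ := p
    obtain ⟨⟨k, l⟩, hkl⟩ := q
    simp only [variance_id_gaussianReal, Matrix.one_apply, Subtype.mk.injEq, Prod.mk.injEq]
    have two_eq : ((2 : NNReal) : ℝ) = 1 + 1 := by norm_num
    split_ifs <;> grind [NNReal.coe_one]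
  simp only [goeMatrix]
  split_ifs <;> rw [covariance_eval] <;> ring

lemma covariance_symm_outer (w : Fin n → ℝ) (i j k l : Fin n) :
    cov[fun v => v i * w j + w i * v j, fun v => v k * w l + w k * v l;
      Measure.pi fun _ : Fin n => gaussianReal 0 1] =
      w j * w l * δ i k + w j * w k * δ i l + w i * w l * δ j k + w i * w k * δ j l := by
  have eq_dotProduct (x y : Fin n) : (fun v : Fin n → ℝ => v x * w y + w x * v y) =
      fun v => (w y • Pi.single x 1 + w x • Pi.single y 1) ⬝ᵥ v := by
    funext v
    simp [add_dotProduct, mul_comm]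
  rw [eq_dotProduct, eq_dotProduct, covariance_dotProduct_pi_gaussianReal]
  simp only [add_dotProduct, dotProduct_add, smul_dotProduct, dotProduct_smul,
    single_one_dotProduct_single_one, smul_eq_mul]
  ring

/-- The matrix `αU·wwᵀ + β(Vwᵀ + wVᵀ) + θZ` as a function of the triple `x = (U, V, Z)`, where `Z`
is given by its upper-triangular entries. -/
noncomputable def rankTwoModel (α β θ : ℝ) (w : Fin n → ℝ)
    (x : ℝ × (Fin n → ℝ) × (UpperIdx n → ℝ)) (i j : Fin n) : ℝ :=
  α * x.1 * w i * w j + β * (x.2.1 i * w j + w i * x.2.1 j) + θ * goeMatrix x.2.2 i j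

lemma isLinearMap_rankTwoModel (α β θ : ℝ) (w : Fin n → ℝ) :
    IsLinearMap ℝ (rankTwoModel α β θ w) := by
  constructor <;> intros <;> ext i j <;>
    simp only [rankTwoModel, Prod.fst_add, Prod.snd_add, Prod.smul_fst, Prod.smul_snd,
      Pi.add_apply, Pi.smul_apply, smul_eq_mul, (isLinearMap_goeMatrix i j).map_add,
      (isLinearMap_goeMatrix i j).map_smul] <;>
    ring

/-- The law of the triple `(U, V, Z)` of independent Gaussian inputs of `rankTwoModel`. -/
noncomputable abbrev rankTwoMeasure (n : ℕ) : Measure (ℝ × (Fin n → ℝ) × (UpperIdx n → ℝ)) :=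
  (gaussianReal 0 1).prod ((Measure.pi fun _ : Fin n => gaussianReal 0 1).prod (goeMeasure n))

lemma integral_id_rankTwoMeasure (n : ℕ) : (rankTwoMeasure n)[id] = 0 := by
  have hgauss (v : NNReal) : (gaussianReal 0 v)[id] = 0 := integral_id_gaussianReal
  exact integral_id_prod_eq_zero (hgauss 1) <| integral_id_prod_eq_zero
    (integral_id_pi_eq_zero fun _ => hgauss 1) (integral_id_pi_eq_zero fun _ => hgauss _)

lemma covariance_rankTwoModel (α β θ : ℝ) (w : Fin n → ℝ) (i j k l : Fin n) :
    cov[fun x => rankTwoModel α β θ w x i j, fun x => rankTwoModel α β θ w x k l;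
      rankTwoMeasure n] =
      rankTwoCovariance w (α ^ 2) (β ^ 2) (θ ^ 2) i j k l := by
  have memLp_outer (x y : Fin n) : MemLp (fun u => α * (w x * w y) * u) 2 (gaussianReal 0 1) :=
    IsGaussian.memLp_two_id.const_mul _
  have memLp_symm (x y : Fin n) : MemLp (fun v => β * (v x * w y + w x * v y)) 2
      (Measure.pi fun _ : Fin n => gaussianReal 0 1) :=
    memLp_two_of_isLinearMap _ ⟨fun _ _ => by simp only [Pi.add_apply]; ring,
      fun _ _ => by simp only [Pi.smul_apply, smul_eq_mul]; ring⟩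
  have memLp_goe (x y : Fin n) : MemLp (fun z => θ * goeMatrix z x y) 2 (goeMeasure n) :=
    (memLp_two_of_isLinearMap _ (isLinearMap_goeMatrix x y)).const_mul _
  have memLp_symm_add_goe (x y : Fin n) :=
    ((memLp_symm x y).comp_fst (goeMeasure n)).add ((memLp_goe x y).comp_snd _)
  have model_eq (x y : Fin n) : (fun p => rankTwoModel α β θ w p x y) = fun p =>
      α * (w x * w y) * p.1 + (β * (p.2.1 x * w y + w x * p.2.1 y) + θ * goeMatrix p.2.2 x y) := by
    funext p
    rw [rankTwoModel]
    ring
  calc cov[fun p => rankTwoModel α β θ w p i j, fun p => rankTwoModel α β θ w p k l;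
        rankTwoMeasure n]
      = cov[fun u => α * (w i * w j) * u, fun u => α * (w k * w l) * u; gaussianReal 0 1]
        + (cov[fun v => β * (v i * w j + w i * v j), fun v => β * (v k * w l + w k * v l);
            Measure.pi fun _ : Fin n => gaussianReal 0 1]
          + cov[fun z => θ * goeMatrix z i j, fun z => θ * goeMatrix z k l; goeMeasure n]) := by
        rw [model_eq, model_eq, ← covariance_add_prod (memLp_symm i j) (memLp_symm k l)
          (memLp_goe i j) (memLp_goe k l)]
        exact covariance_add_prod (memLp_outer i j) (memLp_outer k l) (memLp_symm_add_goe i j)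
          (memLp_symm_add_goe k l)
    _ = rankTwoCovariance w (α ^ 2) (β ^ 2) (θ ^ 2) i j k l := by
        rw [covariance_const_mul_gaussianReal]
        simp only [covariance_const_mul_left, covariance_const_mul_right, covariance_symm_outer,
          covariance_goeMatrix, rankTwoCovariance]
        ring

end RankTwoModel

/-- **Rank-2 representation of a pure contraction.**
With `α = √((r−2)(r−3)/(r−1))`, `β = √((r−2)/(r−1))`, `θ = √(1/(r−1))`, the pure
contraction `M = G·w^{⊗(r−2)}` of a GOTE(r,n) tensor has the same law as
`X = αU·wwᵀ + β(Vwᵀ + wVᵀ) + θZ`, where `U` is a standard Gaussian, `V` a standard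
Gaussian vector and `Z` a GOE(n) matrix, mutually independent. -/
theorem pure_contraction_rank_two_representation
    (r n : ℕ) (hr : 3 ≤ r) (hn : 1 ≤ n)
    (w : Fin n → ℝ) (hw : ∑ i, w i ^ 2 = 1) :
    Measure.map (fun ω => fun i j => pureContraction ω w i j) (goteMeasure r n)
      = Measure.map
          (fun a : ℝ × (Fin n → ℝ) × (UpperIdx n → ℝ) => fun i j =>
            Real.sqrt (((r : ℝ) - 2) * ((r : ℝ) - 3) / ((r : ℝ) - 1)) * a.1 * w i * w j
              + Real.sqrt (((r : ℝ) - 2) / ((r : ℝ) - 1)) * (a.2.1 i * w j + w i * a.2.1 j)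
              + Real.sqrt (1 / ((r : ℝ) - 1)) * goeMatrix a.2.2 i j)
          ((gaussianReal 0 1).prod
            ((Measure.pi fun _ : Fin n => gaussianReal 0 1).prod (goeMeasure n))) := by
  obtain ⟨s, rfl⟩ : ∃ s, r = s + 2 := ⟨r - 2, by lia⟩
  have one_le_s : (1 : ℝ) ≤ s := mod_cast (by lia : 1 ≤ s)
  refine map_eq_map_of_covariance_eq (integral_id_goteMeasure _ n) (integral_id_rankTwoMeasure n)
    (isLinearMap_pureContraction w) (isLinearMap_rankTwoModel _ _ _ w) fun i j k l =>
      (covariance_pureContraction hw i j k l).trans <|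
        .trans ?_ (covariance_rankTwoModel _ _ _ w i j k l).symm
  have sub_two : ((s + 2 : ℕ) : ℝ) - 2 = s := by push_cast; ring
  have sub_three : ((s + 2 : ℕ) : ℝ) - 3 = s - 1 := by push_cast; ring
  have sub_one : ((s + 2 : ℕ) : ℝ) - 1 = s + 1 := by push_cast; ring
  have alpha_sq_nonneg : (0 : ℝ) ≤ s * (s - 1) / (s + 1) :=
    div_nonneg (mul_nonneg s.cast_nonneg (sub_nonneg.mpr one_le_s)) (by positivity)
  rw [sub_one, sub_two, sub_three, Real.sq_sqrt alpha_sq_nonneg, Real.sq_sqrt (by positivity),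
    Real.sq_sqrt (by positivity)]
end
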